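/- Let s ∈ (0,1), u ∈ C_c^∞(ℝⁿ), and let U be its Caffarelli–Silvestre extension. Assume ∫₀^∞∫_{ℝⁿ} z^{1−2s} ( |∇_x² U(x,z)|² + |∇_x ∂_z U(x,z)|² ) dx dz < ∞. Then the function x ↦ Γ₁(u,u)(x) is twice continuously differentiable and, for every x ∈ ℝⁿ, ½ Δ( Γ₁(u,u) )(x) − Γ₁(u, Δu)(x) = β_s ∫₀^∞ ( P_z^{(s)} ∗ ( |∇_x² U(·,z)|² + |∇_x ∂_z U(·,z)|² ) )(x) z^{1−2s} dz, where Δ is the classical Laplacian on ℝⁿ and |∇_x² U|² is the squared Frobenius norm of the Hessian in the x-variables. -/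

import Mathlib

open MeasureTheory Filter Set
open scoped Topology ENNReal NNReal

noncomputable section

/-- `ℝⁿ` with the Euclidean norm. -/
abbrev En (n : ℕ) := EuclideanSpace ℝ (Fin n)

/-- The normalizing constant `p(n,s) = Γ(n/2+s)/(π^{n/2} Γ(s))` of the Poisson kernel. -/
def pns (n : ℕ) (s : ℝ) : ℝ :=
  Real.Gamma ((n : ℝ) / 2 + s) / (Real.pi ^ ((n : ℝ) / 2) * Real.Gamma s)

/-- The fractional Poisson kernel `P_z^{(s)}(x) = p(n,s) z^{2s} (|x|² + z²)^{-(n+2s)/2}`. -/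
def Pker (n : ℕ) (s z : ℝ) (x : En n) : ℝ :=
  pns n s * z ^ (2 * s) * (‖x‖ ^ 2 + z ^ 2) ^ (-((n : ℝ) + 2 * s) / 2)

/-- Convolution with the fractional Poisson kernel in the first variable, at fixed `z`. -/
def Pconv (n : ℕ) (s z : ℝ) (f : En n → ℝ) (x : En n) : ℝ :=
  ∫ y, Pker n s z (x - y) * f y

/-- The Caffarelli–Silvestre extension `U(x,z) = (P_z^{(s)} ∗ u)(x)`. -/
def CSext (n : ℕ) (s : ℝ) (u : En n → ℝ) (x : En n) (z : ℝ) : ℝ :=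
  Pconv n s z u x

/-- The constant `C(n,s) = 4^s Γ(n/2+s) / (π^{n/2} |Γ(-s)|)`. -/
def Cns (n : ℕ) (s : ℝ) : ℝ :=
  4 ^ s * Real.Gamma ((n : ℝ) / 2 + s) / (Real.pi ^ ((n : ℝ) / 2) * |Real.Gamma (-s)|)

/-- The fractional Laplacian `(-Δ)^s w(x)` as a principal-value singular integral. -/
def fracLap (n : ℕ) (s : ℝ) (w : En n → ℝ) (x : En n) : ℝ :=
  Cns n s * limUnder (𝓝[>] (0 : ℝ))
    (fun ε : ℝ => ∫ y in {y : En n | ε < ‖x - y‖}, (w x - w y) / ‖x - y‖ ^ ((n : ℝ) + 2 * s))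

/-- `Λ^s w := -(-Δ)^s w`. -/
def Lam (n : ℕ) (s : ℝ) (w : En n → ℝ) (x : En n) : ℝ := - fracLap n s w x

/-- The first-order carré du champ `Γ₁(u,v) = ½(Λ^s(uv) - u Λ^s v - v Λ^s u)`. -/
def Gamma1 (n : ℕ) (s : ℝ) (u v : En n → ℝ) (x : En n) : ℝ :=
  (Lam n s (fun y => u y * v y) x - u x * Lam n s v x - v x * Lam n s u x) / 2

/-- The constant `β_s = 2^{2s-1} Γ(s)/Γ(1-s)`. -/
def betaS (s : ℝ) : ℝ := 2 ^ (2 * s - 1) * Real.Gamma s / Real.Gamma (1 - s)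

/-- Partial derivative in the `i`-th coordinate direction. -/
def pd {n : ℕ} (i : Fin n) (f : En n → ℝ) (x : En n) : ℝ :=
  fderiv ℝ f x (EuclideanSpace.single i 1)

/-- The Laplacian in the `x`-variables. -/
def lapX {n : ℕ} (f : En n → ℝ) (x : En n) : ℝ := ∑ i, pd i (pd i f) x

/-- The degenerate operator `L_s W = div_{x,z}(z^{1-2s} ∇̃W)`, written out as
`z^{1-2s} Δ_x W + ∂_z(z^{1-2s} ∂_z W)`. -/
def LsOp {n : ℕ} (s : ℝ) (W : En n → ℝ → ℝ) (x : En n) (z : ℝ) : ℝ :=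
  z ^ (1 - 2 * s) * lapX (fun y => W y z) x
    + deriv (fun t => t ^ (1 - 2 * s) * deriv (W x) t) z



/-- Radial building block. -/
def rad {n : ℕ} (b z : ℝ) (w : En n) : ℝ := (‖w‖ ^ 2 + z ^ 2) ^ (-b / 2)

lemma base_pos {n : ℕ} {z : ℝ} (hz : 0 < z) (w : En n) : 0 < ‖w‖ ^ 2 + z ^ 2 := by positivity

lemma rad_pos {n : ℕ} {b z : ℝ} (hz : 0 < z) (w : En n) : 0 < rad b z w :=
  Real.rpow_pos_of_pos (base_pos hz w) _

lemma rad_neg {n : ℕ} {b z : ℝ} (w : En n) : rad b z (-w) = rad b z w := by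
  simp [rad]

lemma rad_cont {n : ℕ} {b z : ℝ} (hz : 0 < z) : Continuous (rad (n := n) b z) := by
  unfold rad
  refine Continuous.rpow_const (by fun_prop) (fun w => Or.inl (base_pos hz w).ne')

lemma rad_scale {n : ℕ} {b z : ℝ} (hz : 0 < z) (w : En n) :
    rad b z w = z ^ (-b) * rad b 1 (z⁻¹ • w) := by
  unfold rad
  have h : ‖w‖ ^ 2 + z ^ 2 = z ^ 2 * (‖z⁻¹ • w‖ ^ 2 + 1 ^ 2) := by
    rw [norm_smul, norm_inv, Real.norm_of_nonneg hz.le]; field_simp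
  rw [h, Real.mul_rpow (by positivity) (by positivity), ← Real.rpow_natCast, ← Real.rpow_mul hz.le]
  congr 2; push_cast; ring

lemma rad_one_integrable {n : ℕ} {b : ℝ} (hb : (n : ℝ) < b) : Integrable (rad (n := n) b 1) := by
  have := integrable_rpow_neg_one_add_norm_sq (E := En n) (μ := volume) (r := b) (by simpa using hb)
  refine this.congr (ae_of_all _ fun w => ?_)
  simp [rad, add_comm]

lemma rad_integrable {n : ℕ} {b z : ℝ} (hz : 0 < z) (hb : (n : ℝ) < b) :
    Integrable (rad (n := n) b z) := by
  have : rad (n := n) b z = fun w => z ^ (-b) * rad b 1 (z⁻¹ • w) := by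
    ext w; exact rad_scale hz w
  rw [this]
  exact ((rad_one_integrable hb).comp_smul (inv_ne_zero hz.ne')).const_mul _

lemma rad_integral {n : ℕ} {b z : ℝ} (hz : 0 < z) :
    ∫ w : En n, rad b z w = z ^ ((n : ℝ) - b) * ∫ w : En n, rad b 1 w := by
  simp_rw [fun w : En n => rad_scale (b := b) hz w]
  rw [integral_const_mul, Measure.integral_comp_inv_smul_of_nonneg _ _ hz.le]
  simp only [finrank_euclideanSpace, Fintype.card_fin, smul_eq_mul]
  rw [← mul_assoc, ← Real.rpow_natCast z n, ← Real.rpow_add hz]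
  congr 2; ring

lemma rad_anti {n : ℕ} {b z z1 : ℝ} (hz1 : 0 < z1) (hz : z1 ≤ z) (hb : 0 ≤ b) (w : En n) :
    rad b z w ≤ rad b z1 w := by
  unfold rad
  apply Real.rpow_le_rpow_of_nonpos (base_pos hz1 w) _ (by linarith)
  gcongr

lemma rad_succ {n : ℕ} {b z : ℝ} (hz : 0 < z) (w : En n) :
    (‖w‖ ^ 2 + z ^ 2) * rad (b + 2) z w = rad b z w := by
  unfold rad
  nth_rewrite 1 [← Real.rpow_one (‖w‖ ^ 2 + z ^ 2)]
  rw [← Real.rpow_add (base_pos hz w)]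
  congr 1; ring

lemma rad_hasDerivAt {n : ℕ} {b z : ℝ} (hz : 0 < z) (w : En n) :
    HasDerivAt (fun t => rad b t w) (-b * z * rad (b + 2) z w) z := by
  unfold rad
  have h1 : HasDerivAt (fun t : ℝ => ‖w‖ ^ 2 + t ^ 2) (2 * z) z := by
    simpa using (hasDerivAt_pow 2 z).const_add (‖w‖ ^ 2)
  have := h1.rpow_const (p := -b / 2) (Or.inl (base_pos hz w).ne')
  convert this using 1
  rw [show -(b + 2) / 2 = -b / 2 - 1 by ring]; ring

lemma rad_hasFDerivAt {n : ℕ} {b z : ℝ} (hz : 0 < z) (w : En n) :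
    HasFDerivAt (fun t => rad b z t) ((-b * rad (b + 2) z w) • innerSL ℝ w) w := by
  unfold rad
  have h1 : HasFDerivAt (fun t : En n => ‖t‖ ^ 2 + z ^ 2) (2 • innerSL ℝ w) w := by
    exact ((hasStrictFDerivAt_norm_sq w).hasFDerivAt).add_const _
  have := h1.rpow_const (p := -b / 2) (Or.inl (base_pos hz w).ne')
  have e : (-b * (‖w‖ ^ 2 + z ^ 2) ^ (-(b + 2) / 2)) • innerSL ℝ w
      = (-b / 2 * (‖w‖ ^ 2 + z ^ 2) ^ (-b / 2 - 1)) • 2 • innerSL ℝ w := by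
    rw [show -(b + 2) / 2 = -b / 2 - 1 by ring]
    ext v; simp; ring
  rw [e]; exact this

lemma rad_pd {n : ℕ} {b z : ℝ} (hz : 0 < z) (i : Fin n) (w : En n) :
    pd i (rad b z) w = -b * rad (b + 2) z w * w i := by
  unfold pd
  rw [(rad_hasFDerivAt hz w).fderiv]
  simp [EuclideanSpace.inner_single_right]

lemma norm_rpow_mul_rad_le {n : ℕ} {b θ z : ℝ} (hz : 0 < z) (hθ : 0 ≤ θ) (w : En n) :
    ‖w‖ ^ θ * rad b z w ≤ rad (b - θ) z w := by
  have h0 := base_pos hz w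
  have h : ‖w‖ ^ θ ≤ (‖w‖ ^ 2 + z ^ 2) ^ (θ / 2) := by
    calc ‖w‖ ^ θ = (‖w‖ ^ 2) ^ (θ / 2) := by
          rw [← Real.rpow_natCast, ← Real.rpow_mul (norm_nonneg _)]; congr 1; push_cast; ring
      _ ≤ _ := Real.rpow_le_rpow (by positivity) (by nlinarith) (by linarith)
  calc _ ≤ (‖w‖ ^ 2 + z ^ 2) ^ (θ / 2) * rad b z w :=
        mul_le_mul_of_nonneg_right h (rad_pos hz w).le
    _ = _ := by
      unfold rad; rw [← Real.rpow_add h0]; congr 1; ring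

lemma z_rpow_mul_rad_le {n : ℕ} {b θ z : ℝ} (hz : 0 < z) (hθ : 0 ≤ θ) (w : En n) :
    z ^ θ * rad b z w ≤ rad (b - θ) z w := by
  have h0 := base_pos hz w
  have h : z ^ θ ≤ (‖w‖ ^ 2 + z ^ 2) ^ (θ / 2) := by
    calc z ^ θ = (z ^ 2) ^ (θ / 2) := by
          rw [← Real.rpow_natCast, ← Real.rpow_mul hz.le]; congr 1; push_cast; ring
      _ ≤ _ := Real.rpow_le_rpow (by positivity) (by nlinarith [sq_nonneg ‖w‖]) (by linarith)
  calc _ ≤ (‖w‖ ^ 2 + z ^ 2) ^ (θ / 2) * rad b z w :=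
        mul_le_mul_of_nonneg_right h (rad_pos hz w).le
    _ = _ := by
      unfold rad; rw [← Real.rpow_add h0]; congr 1; ring

/-- Normalization of the Poisson kernel. -/
lemma rad_normalization {n : ℕ} {s : ℝ} (hs : 0 < s) :
    Real.Gamma ((n : ℝ) / 2 + s) * ∫ w : En n, rad ((n : ℝ) + 2 * s) 1 w
      = Real.pi ^ ((n : ℝ) / 2) * Real.Gamma s := by
  set b : ℝ := (n : ℝ) / 2 + s with hb
  have hb0 : 0 < b := by positivity
  have key : ∀ w : En n, Real.Gamma b * rad ((n : ℝ) + 2 * s) 1 w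
      = ∫ t in Ioi (0 : ℝ), t ^ (b - 1) * Real.exp (-((1 + ‖w‖ ^ 2) * t)) := by
    intro w
    rw [Real.integral_rpow_mul_exp_neg_mul_Ioi hb0 (by positivity)]
    rw [mul_comm, rad]
    congr 1
    rw [one_div, Real.inv_rpow (by positivity), ← Real.rpow_neg (by positivity)]
    congr 1
    · ring
    · rw [hb]; ring
  rw [← integral_const_mul]
  simp_rw [key]
  have hI : ∀ t ∈ Ioi (0 : ℝ), Integrable (fun w : En n => Real.exp (-t * ‖w‖ ^ 2)) := by
    intro t ht
    have := GaussianFourier.integrable_cexp_neg_mul_sq_norm_add (V := En n) (b := (t : ℂ))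
      (by simpa using ht) 0 0
    have := this.re
    refine this.congr (ae_of_all _ fun w => ?_)
    have : Complex.exp (-(t : ℂ) * (‖w‖ : ℂ) ^ 2 + 0 * (inner ℝ 0 w : ℝ))
        = ((Real.exp (-t * ‖w‖ ^ 2) : ℝ) : ℂ) := by
      push_cast; simp
    simp only [this, RCLike.re_to_complex, Complex.ofReal_re]
  have hval : ∀ t ∈ Ioi (0 : ℝ), ∫ w : En n, t ^ (b - 1) * Real.exp (-((1 + ‖w‖ ^ 2) * t))
      = Real.pi ^ ((n : ℝ) / 2) * (t ^ (s - 1) * Real.exp (-t)) := by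
    intro t ht
    have ht : 0 < t := ht
    have : ∀ w : En n, t ^ (b - 1) * Real.exp (-((1 + ‖w‖ ^ 2) * t))
        = (t ^ (b - 1) * Real.exp (-t)) * Real.exp (-t * ‖w‖ ^ 2) := by
      intro w; rw [mul_assoc, ← Real.exp_add]; congr 2; ring
    simp_rw [this]
    rw [integral_const_mul, GaussianFourier.integral_rexp_neg_mul_sq_norm ht]
    simp only [finrank_euclideanSpace, Fintype.card_fin]
    rw [Real.div_rpow Real.pi_pos.le ht.le]
    have : t ^ (b - 1) = t ^ (s - 1) * t ^ ((n : ℝ) / 2) := by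
      rw [← Real.rpow_add ht]; congr 1; rw [hb]; ring
    rw [this]; field_simp
  have hmeas : AEStronglyMeasurable (Function.uncurry fun (t : ℝ) (w : En n) =>
      t ^ (b - 1) * Real.exp (-((1 + ‖w‖ ^ 2) * t)))
      ((volume.restrict (Ioi (0 : ℝ))).prod volume) := by
    apply Measurable.aestronglyMeasurable
    unfold Function.uncurry
    fun_prop
  have hint : Integrable (Function.uncurry fun (t : ℝ) (w : En n) =>
      t ^ (b - 1) * Real.exp (-((1 + ‖w‖ ^ 2) * t)))
      ((volume.restrict (Ioi (0 : ℝ))).prod volume) := by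
    rw [integrable_prod_iff hmeas]
    constructor
    · refine (ae_restrict_iff' measurableSet_Ioi).2 (ae_of_all _ fun t ht => ?_)
      have : ∀ w : En n, t ^ (b - 1) * Real.exp (-((1 + ‖w‖ ^ 2) * t))
          = (t ^ (b - 1) * Real.exp (-t)) * Real.exp (-t * ‖w‖ ^ 2) := by
        intro w; rw [mul_assoc, ← Real.exp_add]; congr 2; ring
      simp only [Function.uncurry, this]
      exact (hI t ht).const_mul _
    · have h1 : IntegrableOn (fun t : ℝ => Real.pi ^ ((n : ℝ) / 2) * (t ^ (s - 1) * Real.exp (-t)))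
          (Ioi 0) := by
        have := (Real.GammaIntegral_convergent hs).const_mul (Real.pi ^ ((n : ℝ) / 2))
        refine this.congr (ae_of_all _ fun t => ?_)
        simp only []; ring
      refine h1.congr ((ae_restrict_iff' measurableSet_Ioi).2 (ae_of_all _ fun t ht => ?_))
      change _ = ∫ y : En n, _
      refine (hval t ht).symm.trans ?_
      refine integral_congr_ae (ae_of_all _ fun w => ?_)
      have ht : 0 < t := ht
      simp only [Function.uncurry]
      rw [Real.norm_of_nonneg (by positivity)]
  rw [← integral_integral_swap (f := fun (t : ℝ) (w : En n) =>
      t ^ (b - 1) * Real.exp (-((1 + ‖w‖ ^ 2) * t))) hint]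
  rw [setIntegral_congr_fun measurableSet_Ioi hval, integral_const_mul, Real.Gamma_eq_integral hs]
  congr 1
  refine integral_congr_ae (ae_of_all _ fun t => ?_)
  simp only []; ring



/-- Weighted `z`-derivative of the Poisson kernel. -/
def Kker (n : ℕ) (s z : ℝ) (w : En n) : ℝ :=
  pns n s * (2 * s * rad ((n : ℝ) + 2 * s) z w
    - ((n : ℝ) + 2 * s) * z ^ 2 * rad ((n : ℝ) + 2 * s + 2) z w)

/-- `x`-Laplacian of the Poisson kernel. -/
def Dker (n : ℕ) (s z : ℝ) (w : En n) : ℝ :=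
  pns n s * z ^ (2 * s) * (((n : ℝ) + 2 * s) * ((2 * s + 2) * rad ((n : ℝ) + 2 * s + 2) z w
    - ((n : ℝ) + 2 * s + 2) * z ^ 2 * rad ((n : ℝ) + 2 * s + 2 + 2) z w))

lemma Pker_eq {n : ℕ} {s z : ℝ} (w : En n) :
    Pker n s z w = pns n s * z ^ (2 * s) * rad ((n : ℝ) + 2 * s) z w := rfl

lemma pns_pos {n : ℕ} {s : ℝ} (hs : 0 < s) : 0 < pns n s := by
  unfold pns
  have h1 := Real.Gamma_pos_of_pos hs
  have h2 : 0 < Real.Gamma ((n : ℝ) / 2 + s) := Real.Gamma_pos_of_pos (by positivity)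
  have := Real.pi_pos
  positivity

lemma Pker_hasDerivAt {n : ℕ} {s z : ℝ} (hz : 0 < z) (w : En n) :
    HasDerivAt (fun t => Pker n s t w) (z ^ (2 * s - 1) * Kker n s z w) z := by
  simp only [Pker_eq]
  have h1 : HasDerivAt (fun t : ℝ => t ^ (2 * s)) (2 * s * z ^ (2 * s - 1)) z :=
    Real.hasDerivAt_rpow_const (Or.inl hz.ne')
  have := (h1.const_mul (pns n s)).mul (rad_hasDerivAt (b := (n : ℝ) + 2 * s) hz w)
  refine this.congr_deriv ?_
  have e : z ^ (2 * s) = z ^ (2 * s - 1) * z := by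
    rw [← Real.rpow_add_one hz.ne']; congr 1; ring
  rw [Kker, e]; ring

lemma Kker_hasDerivAt {n : ℕ} {s z : ℝ} (hz : 0 < z) (w : En n) :
    HasDerivAt (fun t => Kker n s t w) (-(z ^ (1 - 2 * s) * Dker n s z w)) z := by
  unfold Kker
  have h1 : HasDerivAt (fun t : ℝ => t ^ 2) (2 * z) z := by simpa using hasDerivAt_pow 2 z
  have := (((rad_hasDerivAt (b := (n : ℝ) + 2 * s) hz w).const_mul (2 * s)).sub
    ((h1.const_mul ((n : ℝ) + 2 * s)).mul
      (rad_hasDerivAt (b := (n : ℝ) + 2 * s + 2) hz w))).const_mul (pns n s)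
  refine this.congr_deriv ?_
  have e : z ^ (1 - 2 * s) * z ^ (2 * s) = z := by
    rw [← Real.rpow_add hz]; simp
  have : z ^ (1 - 2 * s) * Dker n s z w = z * (pns n s * (((n : ℝ) + 2 * s) * ((2 * s + 2) * rad ((n : ℝ) + 2 * s + 2) z w
    - ((n : ℝ) + 2 * s + 2) * z ^ 2 * rad ((n : ℝ) + 2 * s + 2 + 2) z w))) := by
    rw [Dker]; linear_combination (pns n s * (((n : ℝ) + 2 * s) * ((2 * s + 2) * rad ((n : ℝ) + 2 * s + 2) z w
    - ((n : ℝ) + 2 * s + 2) * z ^ 2 * rad ((n : ℝ) + 2 * s + 2 + 2) z w))) * e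
  rw [this]; ring

lemma sq_mul_rad_le {n : ℕ} {b z : ℝ} (hz : 0 < z) (w : En n) :
    z ^ 2 * rad (b + 2) z w ≤ rad b z w := by
  have h := rad_succ (b := b) hz w
  have := rad_pos (b := b + 2) hz w
  nlinarith [sq_nonneg ‖w‖, mul_nonneg (sq_nonneg ‖w‖) this.le]

lemma Pker_pos {n : ℕ} {s z : ℝ} (hs : 0 < s) (hz : 0 < z) (w : En n) : 0 < Pker n s z w := by
  rw [Pker_eq]
  have := pns_pos (n := n) hs
  have := rad_pos (b := (n : ℝ) + 2 * s) hz w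
  positivity

lemma Pker_cont {n : ℕ} {s z : ℝ} (hz : 0 < z) : Continuous (Pker n s z) :=
  continuous_const.mul (rad_cont hz)

lemma Kker_cont {n : ℕ} {s z : ℝ} (hz : 0 < z) : Continuous (Kker n s z) :=
  continuous_const.mul ((continuous_const.mul (rad_cont hz)).sub
    (continuous_const.mul (rad_cont hz)))

lemma Dker_cont {n : ℕ} {s z : ℝ} (hz : 0 < z) : Continuous (Dker n s z) :=
  continuous_const.mul (continuous_const.mul ((continuous_const.mul (rad_cont hz)).sub
    (continuous_const.mul (rad_cont hz))))

lemma Pker_neg {n : ℕ} {s z : ℝ} (w : En n) : Pker n s z (-w) = Pker n s z w := by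
  simp [Pker]

lemma Kker_neg {n : ℕ} {s z : ℝ} (w : En n) : Kker n s z (-w) = Kker n s z w := by
  simp [Kker, rad_neg]

/-- constant -/
def CK (n : ℕ) (s : ℝ) : ℝ := pns n s * (2 * s + ((n : ℝ) + 2 * s))

lemma CK_pos {n : ℕ} {s : ℝ} (hs : 0 < s) : 0 < CK n s := by
  have := pns_pos (n := n) hs
  unfold CK; positivity

lemma Kker_abs_le {n : ℕ} {s z : ℝ} (hs : 0 < s) (hz : 0 < z) (w : En n) :
    |Kker n s z w| ≤ CK n s * rad ((n : ℝ) + 2 * s) z w := by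
  have hp := pns_pos (n := n) hs
  have h1 := sq_mul_rad_le (b := (n : ℝ) + 2 * s) hz w
  have h2 := rad_pos (b := (n : ℝ) + 2 * s) hz w
  have h3 := rad_pos (b := (n : ℝ) + 2 * s + 2) hz w
  rw [Kker, CK, abs_mul, abs_of_pos hp, mul_assoc (pns n s)]
  refine mul_le_mul_of_nonneg_left ?_ hp.le
  have hN : 0 < (n : ℝ) + 2 * s := by positivity
  have h4 := mul_le_mul_of_nonneg_left h1 hN.le
  have h5 : 0 < (n : ℝ) + 2 * s := hN
  have h6 : 0 < ((n : ℝ) + 2 * s) * (z ^ 2 * rad ((n : ℝ) + 2 * s + 2) z w) := by positivity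
  have h7 : 0 < s * rad ((n : ℝ) + 2 * s) z w := by positivity
  have h8 : 0 < ((n : ℝ) + 2 * s) * rad ((n : ℝ) + 2 * s) z w := by positivity
  rw [abs_le]; constructor <;> nlinarith

/-- constant -/
def CD (n : ℕ) (s : ℝ) : ℝ :=
  pns n s * (((n : ℝ) + 2 * s) * ((2 * s + 2) + ((n : ℝ) + 2 * s + 2)))

lemma CD_pos {n : ℕ} {s : ℝ} (hs : 0 < s) : 0 < CD n s := by
  have := pns_pos (n := n) hs
  unfold CD; positivity

lemma Dker_abs_le {n : ℕ} {s z : ℝ} (hs : 0 < s) (hz : 0 < z) (w : En n) :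
    |Dker n s z w| ≤ CD n s * z ^ (2 * s) * rad ((n : ℝ) + 2 * s + 2) z w := by
  have hp := pns_pos (n := n) hs
  have h1 := sq_mul_rad_le (b := (n : ℝ) + 2 * s + 2) hz w
  have h2 := rad_pos (b := (n : ℝ) + 2 * s + 2) hz w
  have h3 := rad_pos (b := (n : ℝ) + 2 * s + 2 + 2) hz w
  have hN : 0 < (n : ℝ) + 2 * s := by positivity
  rw [Dker, CD, abs_mul, abs_of_pos (by positivity), abs_mul, abs_of_pos hN]
  have : |((2 * s + 2) * rad ((n : ℝ) + 2 * s + 2) z w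
    - ((n : ℝ) + 2 * s + 2) * z ^ 2 * rad ((n : ℝ) + 2 * s + 2 + 2) z w)|
      ≤ ((2 * s + 2) + ((n : ℝ) + 2 * s + 2)) * rad ((n : ℝ) + 2 * s + 2) z w := by
    have h4 := mul_le_mul_of_nonneg_left h1 (a := (n : ℝ) + 2 * s + 2) (by positivity)
    have h6 : 0 < ((n : ℝ) + 2 * s + 2) * (z ^ 2 * rad ((n : ℝ) + 2 * s + 2 + 2) z w) := by positivity
    have h7 : 0 < (2 * s + 2) * rad ((n : ℝ) + 2 * s + 2) z w := by positivity
    have h8 : 0 < ((n : ℝ) + 2 * s + 2) * rad ((n : ℝ) + 2 * s + 2) z w := by positivity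
    rw [abs_le]; constructor <;> nlinarith
  have h9 : 0 ≤ pns n s * z ^ (2 * s) * ((n : ℝ) + 2 * s) := by positivity
  have := mul_le_mul_of_nonneg_left this h9
  nlinarith

lemma Pker_integrable {n : ℕ} {s z : ℝ} (hs : 0 < s) (hz : 0 < z) : Integrable (Pker n s z) :=
  (rad_integrable hz (by linarith)).const_mul _

lemma Kker_integrable {n : ℕ} {s z : ℝ} (hs : 0 < s) (hz : 0 < z) : Integrable (Kker n s z) :=
  (((rad_integrable hz (by linarith)).const_mul _).sub
    ((rad_integrable hz (by linarith)).const_mul _)).const_mul _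

lemma Dker_integrable {n : ℕ} {s z : ℝ} (hs : 0 < s) (hz : 0 < z) : Integrable (Dker n s z) :=
  ((((rad_integrable hz (by linarith)).const_mul _).sub
    ((rad_integrable hz (by linarith)).const_mul _)).const_mul _).const_mul _

lemma Pker_integral {n : ℕ} {s z : ℝ} (hs : 0 < s) (hz : 0 < z) :
    ∫ w, Pker n s z w = 1 := by
  simp_rw [Pker_eq]
  rw [integral_const_mul, rad_integral hz]
  have h := rad_normalization (n := n) hs
  have e : z ^ (2 * s) * z ^ ((n : ℝ) - ((n : ℝ) + 2 * s)) = 1 := by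
    rw [← Real.rpow_add hz]; simp
  have h1 := Real.Gamma_pos_of_pos hs
  have := Real.pi_pos
  rw [pns]
  have h3 : 0 < Real.pi ^ ((n : ℝ) / 2) * Real.Gamma s := by positivity
  calc _ = (z ^ (2 * s) * z ^ ((n : ℝ) - ((n : ℝ) + 2 * s))) * (Real.Gamma ((n : ℝ) / 2 + s) * ∫ w : En n, rad ((n : ℝ) + 2 * s) 1 w) / (Real.pi ^ ((n : ℝ) / 2) * Real.Gamma s) := by ring
    _ = 1 := by rw [e, h]; field_simp

/-- Bounded continuous times integrable, translated. -/
lemma int_mul_bdd {n : ℕ} {k g : En n → ℝ} (hk : Integrable k) (hg : Continuous g) {M : ℝ}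
    (hM : ∀ y, |g y| ≤ M) (x : En n) : Integrable (fun y => k (x - y) * g y) := by
  have h1 : Integrable (fun y => k (x - y)) := hk.comp_sub_left x
  exact h1.mul_bdd hg.aestronglyMeasurable (ae_of_all _ fun y => by simpa using hM y)

lemma int_mul_bdd_le {n : ℕ} {k r g : En n → ℝ} {C : ℝ} (hr : Integrable r)
    (hk : ∀ w, |k w| ≤ C * r w) {M : ℝ}
    (hM : ∀ y, |g y| ≤ M) (x : En n) : |∫ y, k (x - y) * g y| ≤ C * M * ∫ w, r w := by
  have hM0 : 0 ≤ M := (abs_nonneg _).trans (hM 0)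
  have h1 : Integrable (fun y => r (x - y)) := hr.comp_sub_left x
  calc |∫ y, k (x - y) * g y| ≤ ∫ y, C * M * r (x - y) := by
        rw [← Real.norm_eq_abs]
        refine norm_integral_le_of_norm_le (h1.const_mul _) (ae_of_all _ fun y => ?_)
        rw [norm_mul, Real.norm_eq_abs, Real.norm_eq_abs]
        calc _ ≤ (C * r (x - y)) * M :=
              mul_le_mul (hk _) (hM y) (abs_nonneg _) ((abs_nonneg _).trans (hk _))
          _ = _ := by ring
    _ = _ := by
        rw [integral_const_mul, integral_sub_left_eq_self (fun w => r w)]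

/-- Differentiation in `z` of kernel integrals. -/
lemma conv_hasDerivAt {n : ℕ} {k k' : ℝ → En n → ℝ} {C : ℝ → ℝ} {b : ℝ} {g : En n → ℝ}
    (hb : (n : ℝ) < b) (hk : ∀ z, 0 < z → Integrable (k z))
    (hk'c : ∀ z, 0 < z → Continuous (k' z))
    (hder : ∀ z, 0 < z → ∀ w, HasDerivAt (fun t => k t w) (k' z w) z)
    (hbd : ∀ z, 0 < z → ∀ w, |k' z w| ≤ C z * rad b z w)
    (hC : ContinuousOn C (Ioi 0))
    (hg : Continuous g) {M : ℝ} (hM : ∀ y, |g y| ≤ M) (x : En n) {z : ℝ} (hz : 0 < z) :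
    HasDerivAt (fun t => ∫ y, k t (x - y) * g y) (∫ y, k' z (x - y) * g y) z := by
  have hM0 : 0 ≤ M := (abs_nonneg _).trans (hM 0)
  obtain ⟨C0, hC0⟩ : ∃ C0, ∀ t ∈ Icc (z / 2) (2 * z), C t ≤ C0 := by
    have := (isCompact_Icc (a := z / 2) (b := 2 * z)).bddAbove_image
      (hC.mono (fun t ht => by have := ht.1; simp; linarith))
    obtain ⟨C0, h⟩ := this
    exact ⟨C0, fun t ht => h ⟨t, ht, rfl⟩⟩
  have hnhds : Ioo (z / 2) (2 * z) ∈ 𝓝 z := Ioo_mem_nhds (by linarith) (by linarith)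
  have hint : Integrable (fun y => rad b (z / 2) (x - y)) :=
    (rad_integrable (by linarith) hb).comp_sub_left x
  refine (hasDerivAt_integral_of_dominated_loc_of_deriv_le (F := fun t y => k t (x - y) * g y)
    (F' := fun t y => k' t (x - y) * g y)
    (bound := fun y => C0 * rad b (z / 2) (x - y) * M) hnhds ?_ ?_ ?_ ?_ ?_ ?_).2
  · filter_upwards [hnhds] with t ht
    exact (int_mul_bdd (hk t (by linarith [ht.1])) hg hM x).aestronglyMeasurable
  · exact int_mul_bdd (hk z hz) hg hM x
  · exact (((hk'c z hz).comp (continuous_const.sub continuous_id)).mul hg).aestronglyMeasurable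
  · refine ae_of_all _ fun y t ht => ?_
    have ht0 : 0 < t := by linarith [ht.1]
    rw [norm_mul, Real.norm_eq_abs, Real.norm_eq_abs]
    have h1 := hbd t ht0 (x - y)
    have h2 : C t * rad b t (x - y) ≤ C0 * rad b (z / 2) (x - y) := by
      have hr := rad_pos (b := b) ht0 (x - y)
      have hCt : 0 ≤ C t := by
        by_contra hneg
        have := (abs_nonneg _).trans h1
        nlinarith
      exact mul_le_mul (hC0 t ⟨ht.1.le, ht.2.le⟩)
        (rad_anti (by linarith) ht.1.le (by linarith [(Nat.cast_nonneg n : (0:ℝ) ≤ n)]) _)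
        hr.le (hCt.trans (hC0 t ⟨ht.1.le, ht.2.le⟩))
    exact mul_le_mul (h1.trans h2) (hM y) (abs_nonneg _) ((abs_nonneg _).trans (h1.trans h2))
  · exact (hint.const_mul C0).mul_const M
  · refine ae_of_all _ fun y t ht => ?_
    exact (hder t (by linarith [ht.1]) (x - y)).mul_const _

lemma Pconv_hasDerivAt {n : ℕ} {s : ℝ} (hs : 0 < s) {g : En n → ℝ} (hg : Continuous g) {M : ℝ}
    (hM : ∀ y, |g y| ≤ M) (x : En n) {z : ℝ} (hz : 0 < z) :
    HasDerivAt (fun t => ∫ y, Pker n s t (x - y) * g y)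
      (z ^ (2 * s - 1) * ∫ y, Kker n s z (x - y) * g y) z := by
  rw [← integral_const_mul]
  simp_rw [← mul_assoc]
  refine conv_hasDerivAt (k := Pker n s) (k' := fun z w => z ^ (2 * s - 1) * Kker n s z w)
    (C := fun z => z ^ (2 * s - 1) * CK n s) (b := (n : ℝ) + 2 * s)
    (by linarith) (fun z hz => Pker_integrable hs hz)
    (fun z hz => continuous_const.mul (Kker_cont hz)) (fun z hz w => Pker_hasDerivAt hz w)
    ?_ ?_ hg hM x hz
  · intro z hz w
    rw [abs_mul, abs_of_pos (Real.rpow_pos_of_pos hz _), mul_assoc]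
    exact mul_le_mul_of_nonneg_left (Kker_abs_le hs hz w) (Real.rpow_pos_of_pos hz _).le
  · exact ContinuousOn.mul (fun t ht => (Real.continuousAt_rpow_const _ _ (Or.inl (ne_of_gt ht))).continuousWithinAt) continuousOn_const

lemma Kconv_hasDerivAt {n : ℕ} {s : ℝ} (hs : 0 < s) {g : En n → ℝ} (hg : Continuous g) {M : ℝ}
    (hM : ∀ y, |g y| ≤ M) (x : En n) {z : ℝ} (hz : 0 < z) :
    HasDerivAt (fun t => ∫ y, Kker n s t (x - y) * g y)
      (-(z ^ (1 - 2 * s) * ∫ y, Dker n s z (x - y) * g y)) z := by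
  rw [← neg_mul, ← integral_const_mul]
  simp_rw [← mul_assoc]
  have e : ∀ z : ℝ, 0 < z → z ^ (1 - 2 * s) * z ^ (2 * s) = z := fun z hz => by
    rw [← Real.rpow_add hz]; simp
  refine conv_hasDerivAt (k := Kker n s) (k' := fun z w => -z ^ (1 - 2 * s) * Dker n s z w)
    (C := fun z => z * CD n s) (b := (n : ℝ) + 2 * s + 2)
    (by linarith) (fun z hz => Kker_integrable hs hz)
    (fun z hz => continuous_const.mul (Dker_cont hz))
    (fun z hz w => by simpa using Kker_hasDerivAt hz w)
    ?_ (by fun_prop) hg hM x hz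
  intro z hz w
  have h0 := (Real.rpow_pos_of_pos hz (1 - 2 * s))
  rw [abs_mul, abs_neg, abs_of_pos h0]
  refine (mul_le_mul_of_nonneg_left (Dker_abs_le hs hz w) h0.le).trans (le_of_eq ?_)
  linear_combination (CD n s * rad ((n : ℝ) + 2 * s + 2) z w) * e z hz

lemma Kker_integral {n : ℕ} {s z : ℝ} (hs : 0 < s) (hz : 0 < z) :
    ∫ w, Kker n s z w = 0 := by
  have h := Pconv_hasDerivAt (n := n) hs (g := fun _ => 1) continuous_const (M := 1) (by simp) 0 hz
  have h2 : HasDerivAt (fun t => ∫ y : En n, Pker n s t (0 - y) * 1) 0 z := by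
    refine (hasDerivAt_const z (1 : ℝ)).congr_of_eventuallyEq ?_
    filter_upwards [Ioi_mem_nhds hz] with t ht
    simp only [zero_sub, Pker_neg, mul_one]
    exact Pker_integral hs ht
  have := h.unique h2
  simp only [zero_sub, Kker_neg, mul_one] at this
  have h0 := (Real.rpow_pos_of_pos hz (2 * s - 1))
  exact (mul_eq_zero.1 this).resolve_left h0.ne'



lemma ebp {n : ℕ} {f g : En n → ℝ} (i : Fin n) (hf : Differentiable ℝ f) (hg : Differentiable ℝ g)
    (h1 : Integrable (fun y => pd i f y * g y)) (h2 : Integrable (fun y => f y * pd i g y))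
    (h3 : Integrable (fun y => f y * g y)) :
    ∫ y, f y * pd i g y = - ∫ y, pd i f y * g y :=
  integral_mul_fderiv_eq_neg_fderiv_mul_of_integrable h1 h2 h3 (fun x _ => hf x) (fun x _ => hg x)

lemma coord_le {n : ℕ} (w : En n) (i : Fin n) : |w i| ≤ ‖w‖ := by
  simpa using PiLp.norm_apply_le w i

lemma pd_cont {n : ℕ} {g : En n → ℝ} {k : ℕ∞} (hg : ContDiff ℝ (k + 1) g) (i : Fin n) :
    ContDiff ℝ k (pd i g) := by
  unfold pd
  exact (hg.fderiv_right le_rfl).clm_apply contDiff_const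

/-- First derivative of the translated radial function. -/
def rad1 {n : ℕ} (b z : ℝ) (x : En n) (i : Fin n) (y : En n) : ℝ :=
  -b * rad (b + 2) z (y - x) * (y - x) i

/-- Second derivative of the translated radial function. -/
def rad2 {n : ℕ} (b z : ℝ) (x : En n) (i : Fin n) (y : En n) : ℝ :=
  -b * rad (b + 2) z (y - x) + b * (b + 2) * rad (b + 2 + 2) z (y - x) * (y - x) i ^ 2

lemma radt_hasFDerivAt {n : ℕ} {b z : ℝ} (hz : 0 < z) (x y : En n) :
    HasFDerivAt (fun t => rad b z (t - x)) ((-b * rad (b + 2) z (y - x)) • innerSL ℝ (y - x)) y := by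
  have := (rad_hasFDerivAt (b := b) hz (y - x)).comp y ((hasFDerivAt_id y).sub_const x)
  exact this

lemma radt_pd {n : ℕ} {b z : ℝ} (hz : 0 < z) (x : En n) (i : Fin n) :
    pd i (fun t => rad b z (t - x)) = rad1 b z x i := by
  ext y
  unfold pd rad1
  rw [(radt_hasFDerivAt hz x y).fderiv]
  simp [EuclideanSpace.inner_single_right]

lemma coord_hasFDerivAt {n : ℕ} (x y : En n) (i : Fin n) :
    HasFDerivAt (fun t : En n => (t - x) i) (EuclideanSpace.proj (𝕜 := ℝ) i) y := by
  have h : HasFDerivAt (fun t : En n => EuclideanSpace.proj (𝕜 := ℝ) (ι := Fin n) i t)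
    (EuclideanSpace.proj (𝕜 := ℝ) i) (y - x) := (EuclideanSpace.proj (𝕜 := ℝ) i).hasFDerivAt
  have := h.comp y ((hasFDerivAt_id y).sub_const x)
  exact this

lemma rad1_hasFDerivAt {n : ℕ} {b z : ℝ} (hz : 0 < z) (x y : En n) (i : Fin n) :
    HasFDerivAt (rad1 b z x i) ((-b * rad (b + 2) z (y - x)) • EuclideanSpace.proj (𝕜 := ℝ) i +
      (y - x) i • (-b) • ((-(b + 2) * rad (b + 2 + 2) z (y - x)) • innerSL ℝ (y - x))) y := by
  exact ((radt_hasFDerivAt (b := b + 2) hz x y).const_mul (-b)).mul (coord_hasFDerivAt x y i)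

lemma rad1_pd {n : ℕ} {b z : ℝ} (hz : 0 < z) (x : En n) (i : Fin n) :
    pd i (rad1 b z x i) = rad2 b z x i := by
  ext y
  unfold pd rad2
  rw [(rad1_hasFDerivAt hz x y i).fderiv]
  simp [EuclideanSpace.inner_single_right]
  ring

lemma rad1_abs_le {n : ℕ} {b z : ℝ} (hz : 0 < z) (hb : 0 ≤ b) (x y : En n) (i : Fin n) :
    |rad1 b z x i y| ≤ b * rad (b + 1) z (y - x) := by
  have h := norm_rpow_mul_rad_le (b := b + 2) (θ := 1) hz zero_le_one (y - x)
  rw [Real.rpow_one, show b + 2 - 1 = b + 1 by ring] at h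
  rw [rad1, abs_mul, abs_mul, abs_neg, abs_of_nonneg hb, abs_of_pos (rad_pos hz _), mul_assoc]
  refine mul_le_mul_of_nonneg_left (le_trans ?_ h) hb
  rw [mul_comm]
  exact mul_le_mul_of_nonneg_right (coord_le _ i) (rad_pos hz _).le

lemma rad2_abs_le {n : ℕ} {b z : ℝ} (hz : 0 < z) (hb : 0 ≤ b) (x y : En n) (i : Fin n) :
    |rad2 b z x i y| ≤ (b + b * (b + 2)) * rad (b + 2) z (y - x) := by
  have h := rad_succ (b := b + 2) hz (y - x)
  have h1 := rad_pos (b := b + 2) hz (y - x)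
  have h2 := rad_pos (b := b + 2 + 2) hz (y - x)
  have h3 : (y - x) i ^ 2 ≤ ‖y - x‖ ^ 2 := by
    have := coord_le (y - x) i
    rw [← sq_abs]; gcongr
  have h4 : rad (b + 2 + 2) z (y - x) * (y - x) i ^ 2 ≤ rad (b + 2) z (y - x) := by
    nlinarith [sq_nonneg z, mul_nonneg (sq_nonneg z) h2.le]
  have h5 : 0 ≤ b * (b + 2) := by positivity
  have h6 := mul_le_mul_of_nonneg_left h4 h5
  have h7 : 0 ≤ b * (b + 2) * (rad (b + 2 + 2) z (y - x) * (y - x) i ^ 2) := by positivity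
  have h8 : 0 ≤ b * rad (b + 2) z (y - x) := by positivity
  have h9 : 0 ≤ b * (b + 2) * rad (b + 2) z (y - x) := by positivity
  rw [rad2, abs_le]; constructor <;> nlinarith

lemma int_of_rad_bound {n : ℕ} {b z C M : ℝ} (hz : 0 < z) (hb : (n : ℝ) < b) {k g : En n → ℝ}
    (x : En n) (hk : Continuous k) (hg : Continuous g) (h : ∀ y, |k y| ≤ C * rad b z (y - x))
    (hM : ∀ y, |g y| ≤ M) : Integrable (fun y => k y * g y) := by
  have h1 : Integrable (fun y => C * rad b z (y - x)) :=
    ((rad_integrable hz hb).comp_sub_right x).const_mul C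
  have h2 : Integrable k := h1.mono' hk.aestronglyMeasurable (ae_of_all _ h)
  exact h2.mul_bdd hg.aestronglyMeasurable (ae_of_all _ fun y => by simpa using hM y)

lemma rad_by_parts {n : ℕ} {b z M : ℝ} (hz : 0 < z) (hb : (n : ℝ) < b) {g : En n → ℝ}
    (hg : ContDiff ℝ 2 g) (i : Fin n) (h0 : ∀ y, |g y| ≤ M) (h1 : ∀ y, |pd i g y| ≤ M)
    (h2 : ∀ y, |pd i (pd i g) y| ≤ M) (x : En n) :
    ∫ y, rad b z (y - x) * pd i (pd i g) y = ∫ y, rad2 b z x i y * g y := by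
  have hb0 : 0 ≤ b := (Nat.cast_nonneg n).trans hb.le
  have hg1 : ContDiff ℝ 1 (pd i g) := pd_cont (k := 1) (by simpa [one_add_one_eq_two] using hg) i
  have hg2 : Continuous (pd i (pd i g)) := (pd_cont (k := 0) (by simpa using hg1) i).continuous
  have c0 : Continuous (fun t : En n => rad b z (t - x)) := (rad_cont hz).comp (by fun_prop)
  have d0 : Differentiable ℝ (fun t : En n => rad b z (t - x)) := fun y =>
    (radt_hasFDerivAt hz x y).differentiableAt
  have d1 : Differentiable ℝ (rad1 b z x i) := fun y =>
    (rad1_hasFDerivAt hz x y i).differentiableAt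
  have c2 : Continuous (rad2 b z x i) := by
    unfold rad2
    have a1 : Continuous (fun t : En n => rad (b + 2) z (t - x)) := (rad_cont hz).comp (by fun_prop)
    have a2 : Continuous (fun t : En n => rad (b + 2 + 2) z (t - x)) := (rad_cont hz).comp (by fun_prop)
    fun_prop
  have b0 : ∀ y, |rad b z (y - x)| ≤ 1 * rad b z (y - x) := fun y => by
    rw [abs_of_pos (rad_pos hz _), one_mul]
  have i00 := int_of_rad_bound hz hb x c0 hg2 b0 h2
  have i01 := int_of_rad_bound hz hb x c0 hg1.continuous b0 h1
  have i10 := int_of_rad_bound hz (by linarith) x d1.continuous hg1.continuous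
    (fun y => rad1_abs_le hz hb0 x y i) h1
  have i11 := int_of_rad_bound hz (by linarith) x d1.continuous hg.continuous
    (fun y => rad1_abs_le hz hb0 x y i) h0
  have i20 := int_of_rad_bound hz (by linarith) x c2 hg.continuous
    (fun y => rad2_abs_le hz hb0 x y i) h0
  rw [ebp (f := fun t => rad b z (t - x)) i d0 (hg1.differentiable one_ne_zero) (by rwa [radt_pd hz]) i00 i01]
  rw [radt_pd hz, ebp i d1 (hg.differentiable two_ne_zero) (by rwa [rad1_pd hz]) i10 i11, rad1_pd hz, neg_neg]

lemma sum_rad2 {n : ℕ} {s z : ℝ} (hz : 0 < z) (x y : En n) :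
    pns n s * z ^ (2 * s) * ∑ i, rad2 ((n : ℝ) + 2 * s) z x i y = Dker n s z (x - y) := by
  unfold rad2 Dker
  rw [Finset.sum_add_distrib, ← Finset.mul_sum, ← Finset.mul_sum, ← EuclideanSpace.real_norm_sq_eq]
  simp only [Finset.sum_const, Finset.card_univ, Fintype.card_fin, nsmul_eq_mul]
  have e : ∀ b, rad b z (x - y) = rad b z (y - x) := fun b => by rw [← rad_neg, neg_sub]
  rw [e, e]
  have h := rad_succ (b := (n : ℝ) + 2 * s + 2) hz (y - x)
  rw [← h]; ring

/-- `∫ (ΔP) g = ∫ P Δg`. -/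
lemma Dker_by_parts {n : ℕ} {s z M : ℝ} (hs : 0 < s) (hz : 0 < z) {g : En n → ℝ}
    (hg : ContDiff ℝ 2 g) (h0 : ∀ y, |g y| ≤ M) (h1 : ∀ i y, |pd i g y| ≤ M)
    (h2 : ∀ i y, |pd i (pd i g) y| ≤ M) (x : En n) :
    ∫ y, Dker n s z (x - y) * g y = ∫ y, Pker n s z (x - y) * lapX g y := by
  have hN : 0 < (n : ℝ) + 2 * s := by positivity
  have e : ∀ b y, rad b z (x - y) = rad b z (y - x) := fun b y => by rw [← rad_neg, neg_sub]
  simp_rw [← sum_rad2 hz, lapX, Pker_eq, e, Finset.mul_sum, Finset.sum_mul]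
  have hg1 : ∀ i, ContDiff ℝ 1 (pd i g) := fun i => pd_cont (k := 1) (by simpa [one_add_one_eq_two] using hg) i
  have hg2 : ∀ i, Continuous (pd i (pd i g)) := fun i => (pd_cont (k := 0) (by simpa using hg1 i) i).continuous
  have c0 : Continuous (fun t : En n => rad ((n : ℝ) + 2 * s) z (t - x)) := (rad_cont hz).comp (by fun_prop)
  have c2 : ∀ i, Continuous (rad2 ((n : ℝ) + 2 * s) z x i) := by
    intro i
    unfold rad2
    have a1 : Continuous (fun t : En n => rad ((n : ℝ) + 2 * s + 2) z (t - x)) := (rad_cont hz).comp (by fun_prop)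
    have a2 : Continuous (fun t : En n => rad ((n : ℝ) + 2 * s + 2 + 2) z (t - x)) := (rad_cont hz).comp (by fun_prop)
    fun_prop
  have b0 : ∀ y : En n, |rad ((n : ℝ) + 2 * s) z (y - x)| ≤ 1 * rad ((n : ℝ) + 2 * s) z (y - x) := fun y => by
    rw [abs_of_pos (rad_pos hz _), one_mul]
  simp_rw [mul_assoc]
  rw [integral_finsetSum, integral_finsetSum]
  · refine Finset.sum_congr rfl fun i _ => ?_
    simp_rw [integral_const_mul]
    rw [rad_by_parts hz (by linarith) hg i h0 (h1 i) (h2 i) x]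
  · intro i _
    exact ((int_of_rad_bound hz (by linarith) x c0 (hg2 i) b0 (h2 i)).const_mul _).const_mul _
  · intro i _
    exact ((int_of_rad_bound hz (by linarith) x (c2 i) hg.continuous
      (fun y => rad2_abs_le hz hN.le x y i) h0).const_mul _).const_mul _

/-! ### convolution with smooth compactly supported functions -/

lemma conv_eq {n : ℕ} (k g : En n → ℝ) (x : En n) :
    ∫ y, k (x - y) * g y = convolution k g (ContinuousLinearMap.mul ℝ ℝ) volume x := by
  rw [convolution_def]
  rw [← integral_sub_left_eq_self (fun y => (ContinuousLinearMap.mul ℝ ℝ) (k y) (g (x - y))) volume x]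
  simp

lemma conv_contDiff {n : ℕ} {k g : En n → ℝ} (hk : Continuous k) (hg : ContDiff ℝ (⊤ : ℕ∞) g)
    (hc : HasCompactSupport g) : ContDiff ℝ (⊤ : ℕ∞) (fun x => ∫ y, k (x - y) * g y) := by
  have : (fun x => ∫ y, k (x - y) * g y) = convolution k g (ContinuousLinearMap.mul ℝ ℝ) volume := by
    ext x; exact conv_eq k g x
  rw [this]
  exact hc.contDiff_convolution_right _ hk.locallyIntegrable hg

lemma pd_compact {n : ℕ} {g : En n → ℝ} (hc : HasCompactSupport g) (i : Fin n) :
    HasCompactSupport (pd i g) := by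
  have := hc.fderiv (𝕜 := ℝ)
  exact this.comp_left (g := fun L : En n →L[ℝ] ℝ => L (EuclideanSpace.single i 1)) (by simp)

lemma pd_smooth {n : ℕ} {g : En n → ℝ} (hg : ContDiff ℝ (⊤ : ℕ∞) g) (i : Fin n) :
    ContDiff ℝ (⊤ : ℕ∞) (pd i g) := pd_cont (by simpa using hg) i

lemma conv_pd {n : ℕ} {k g : En n → ℝ} (hk : Continuous k) (hg : ContDiff ℝ (⊤ : ℕ∞) g)
    (hc : HasCompactSupport g) (i : Fin n) (x : En n) :
    pd i (fun x => ∫ y, k (x - y) * g y) x = ∫ y, k (x - y) * pd i g y := by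
  have e : (fun x => ∫ y, k (x - y) * g y) = convolution k g (ContinuousLinearMap.mul ℝ ℝ) volume := by
    ext x; exact conv_eq k g x
  have h1 : ContDiff ℝ 1 g := hg.of_le (by exact_mod_cast le_top)
  have h := hc.hasFDerivAt_convolution_right (ContinuousLinearMap.mul ℝ ℝ) (μ := volume)
    hk.locallyIntegrable h1 x
  rw [pd, e, h.fderiv, conv_eq]
  rw [convolution_def, convolution_def, ContinuousLinearMap.integral_apply]
  · rfl
  · have := (hc.fderiv (𝕜 := ℝ)).convolutionExists_right
      ((ContinuousLinearMap.mul ℝ ℝ).precompR (En n)) (μ := volume) hk.locallyIntegrable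
      (h1.continuous_fderiv one_ne_zero) x
    exact this

lemma exists_bound {n : ℕ} {g : En n → ℝ} (hg : Continuous g) (hc : HasCompactSupport g) :
    ∃ M, 0 ≤ M ∧ ∀ y, |g y| ≤ M := by
  obtain ⟨M, hM⟩ := hc.exists_bound_of_continuous hg
  exact ⟨M, (norm_nonneg _).trans (hM 0), fun y => by simpa using hM y⟩



lemma two_le_topp : (2 : WithTop ℕ∞) ≤ ((⊤ : ℕ∞) : WithTop ℕ∞) :=
  WithTop.coe_le_coe.2 le_top

/-- Differentiation in `z` under the integral, general form. -/
lemma par_hasDerivAt {n : ℕ} {F F' : ℝ → En n → ℝ} {C : ℝ → ℝ} {b : ℝ} (x : En n)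
    (hb : (n : ℝ) < b) (hF : ∀ z, 0 < z → Integrable (F z))
    (hF'c : ∀ z, 0 < z → Continuous (F' z))
    (hder : ∀ z, 0 < z → ∀ w, HasDerivAt (fun t => F t w) (F' z w) z)
    (hbd : ∀ z, 0 < z → ∀ w, |F' z w| ≤ C z * rad b z (x - w))
    (hC : ContinuousOn C (Ioi 0)) {z : ℝ} (hz : 0 < z) :
    HasDerivAt (fun t => ∫ y, F t y) (∫ y, F' z y) z := by
  obtain ⟨C0, hC0⟩ : ∃ C0, ∀ t ∈ Icc (z / 2) (2 * z), C t ≤ C0 := by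
    have := (isCompact_Icc (a := z / 2) (b := 2 * z)).bddAbove_image
      (hC.mono (fun t ht => by have := ht.1; simp; linarith))
    obtain ⟨C0, h⟩ := this
    exact ⟨C0, fun t ht => h ⟨t, ht, rfl⟩⟩
  have hnhds : Ioo (z / 2) (2 * z) ∈ 𝓝 z := Ioo_mem_nhds (by linarith) (by linarith)
  have hint : Integrable (fun y => rad b (z / 2) (x - y)) :=
    (rad_integrable (by linarith) hb).comp_sub_left x
  refine (hasDerivAt_integral_of_dominated_loc_of_deriv_le (F := F) (F' := F')
    (bound := fun y => C0 * rad b (z / 2) (x - y)) hnhds ?_ ?_ ?_ ?_ ?_ ?_).2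
  · filter_upwards [hnhds] with t ht
    exact (hF t (by linarith [ht.1])).aestronglyMeasurable
  · exact hF z hz
  · exact (hF'c z hz).aestronglyMeasurable
  · refine ae_of_all _ fun y t ht => ?_
    have ht0 : 0 < t := by linarith [ht.1]
    rw [Real.norm_eq_abs]
    have h1 := hbd t ht0 y
    have h2 : C t * rad b t (x - y) ≤ C0 * rad b (z / 2) (x - y) := by
      have hr := rad_pos (b := b) ht0 (x - y)
      have hCt : 0 ≤ C t := by
        by_contra hneg
        have := (abs_nonneg _).trans h1
        nlinarith
      exact mul_le_mul (hC0 t ⟨ht.1.le, ht.2.le⟩)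
        (rad_anti (by linarith) ht.1.le (by linarith [(Nat.cast_nonneg n : (0:ℝ) ≤ n)]) _)
        hr.le (hCt.trans (hC0 t ⟨ht.1.le, ht.2.le⟩))
    exact h1.trans h2
  · exact hint.const_mul C0
  · refine ae_of_all _ fun y t ht => ?_
    exact hder t (by linarith [ht.1]) y

/-- Weighted `z`-derivative of the extension. -/
def Aext (n : ℕ) (s : ℝ) (v : En n → ℝ) (y : En n) (z : ℝ) : ℝ := ∫ w, Kker n s z (y - w) * v w

lemma CSext_hasDerivAt {n : ℕ} {s : ℝ} (hs : 0 < s) {v : En n → ℝ} (hv : Continuous v) {M : ℝ}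
    (hM : ∀ y, |v y| ≤ M) (y : En n) {z : ℝ} (hz : 0 < z) :
    HasDerivAt (CSext n s v y) (z ^ (2 * s - 1) * Aext n s v y z) z :=
  Pconv_hasDerivAt hs hv hM y hz

lemma CSext_smooth {n : ℕ} {s z : ℝ} {v : En n → ℝ} (hv : ContDiff ℝ (⊤ : ℕ∞) v)
    (hc : HasCompactSupport v) (hz : 0 < z) : ContDiff ℝ (⊤ : ℕ∞) (fun y => CSext n s v y z) :=
  conv_contDiff (Pker_cont hz) hv hc

lemma Aext_smooth {n : ℕ} {s z : ℝ} {v : En n → ℝ} (hv : ContDiff ℝ (⊤ : ℕ∞) v)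
    (hc : HasCompactSupport v) (hz : 0 < z) : ContDiff ℝ (⊤ : ℕ∞) (fun y => Aext n s v y z) :=
  conv_contDiff (Kker_cont hz) hv hc

lemma CSext_pd {n : ℕ} {s z : ℝ} {v : En n → ℝ} (hv : ContDiff ℝ (⊤ : ℕ∞) v)
    (hc : HasCompactSupport v) (hz : 0 < z) (i : Fin n) :
    pd i (fun y => CSext n s v y z) = fun y => CSext n s (pd i v) y z := by
  ext x; exact conv_pd (Pker_cont hz) hv hc i x

lemma Aext_pd {n : ℕ} {s z : ℝ} {v : En n → ℝ} (hv : ContDiff ℝ (⊤ : ℕ∞) v)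
    (hc : HasCompactSupport v) (hz : 0 < z) (i : Fin n) :
    pd i (fun y => Aext n s v y z) = fun y => Aext n s (pd i v) y z := by
  ext x; exact conv_pd (Kker_cont hz) hv hc i x

lemma CSext_abs_le {n : ℕ} {s z M : ℝ} (hs : 0 < s) (hz : 0 < z) {v : En n → ℝ}
    (hM : ∀ y, |v y| ≤ M) (y : En n) : |CSext n s v y z| ≤ M := by
  have := int_mul_bdd_le (k := Pker n s z) (r := Pker n s z) (C := 1) (Pker_integrable hs hz)
    (fun w => by rw [abs_of_pos (Pker_pos hs hz w), one_mul]) hM y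
  rw [Pker_integral hs hz] at this
  simpa [CSext, Pconv] using this

/-- constant -/
def crad (n : ℕ) (b : ℝ) : ℝ := ∫ w : En n, rad b 1 w

lemma crad_nonneg {n : ℕ} {b : ℝ} : 0 ≤ crad n b :=
  integral_nonneg fun w => (rad_pos one_pos w).le

lemma Aext_abs_le {n : ℕ} {s z M : ℝ} (hs : 0 < s) (hz : 0 < z) {v : En n → ℝ}
    (hM : ∀ y, |v y| ≤ M) (y : En n) :
    |Aext n s v y z| ≤ CK n s * M * crad n ((n : ℝ) + 2 * s) * z ^ (-(2 * s)) := by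
  have := int_mul_bdd_le (k := Kker n s z) (r := rad ((n : ℝ) + 2 * s) z) (C := CK n s)
    (rad_integrable hz (by linarith)) (fun w => Kker_abs_le hs hz w) hM y
  refine this.trans (le_of_eq ?_)
  rw [rad_integral hz, crad, show (n : ℝ) - ((n : ℝ) + 2 * s) = -(2 * s) by ring]; ring

lemma lap_smooth {n : ℕ} {v : En n → ℝ} (hv : ContDiff ℝ (⊤ : ℕ∞) v) :
    ContDiff ℝ (⊤ : ℕ∞) (lapX v) := by
  unfold lapX
  exact ContDiff.sum fun i _ => pd_smooth (pd_smooth hv i) i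

lemma sum_compact {n : ℕ} {ι : Type} (S : Finset ι) (f : ι → En n → ℝ)
    (h : ∀ i, HasCompactSupport (f i)) : HasCompactSupport (fun x => ∑ i ∈ S, f i x) := by
  classical
  induction S using Finset.induction_on with
  | empty => simp only [Finset.sum_empty]; exact HasCompactSupport.zero
  | insert a S ha ih =>
    simp_rw [Finset.sum_insert ha]
    exact (h a).add ih

lemma lap_compact {n : ℕ} {v : En n → ℝ} (hc : HasCompactSupport v) :
    HasCompactSupport (lapX v) := by
  unfold lapX
  exact sum_compact _ _ fun i => pd_compact (pd_compact hc i) i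

/-- Smooth and compactly supported. -/
structure Test {n : ℕ} (v : En n → ℝ) : Prop where
  smooth : ContDiff ℝ (⊤ : ℕ∞) v
  compact : HasCompactSupport v

lemma Test.pd {n : ℕ} {v : En n → ℝ} (h : Test v) (i : Fin n) : Test (pd i v) :=
  ⟨pd_smooth h.smooth i, pd_compact h.compact i⟩

lemma Test.lap {n : ℕ} {v : En n → ℝ} (h : Test v) : Test (lapX v) :=
  ⟨lap_smooth h.smooth, lap_compact h.compact⟩

lemma Test.bound {n : ℕ} {v : En n → ℝ} (h : Test v) : ∃ M, 0 ≤ M ∧ ∀ y, |v y| ≤ M :=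
  exists_bound h.smooth.continuous h.compact

lemma Test.bound_fin {n : ℕ} {v : Fin n → En n → ℝ} (h : ∀ i, Test (v i)) :
    ∃ M, 0 ≤ M ∧ ∀ i y, |v i y| ≤ M := by
  choose M h0 hM using fun i => (h i).bound
  refine ⟨∑ i, M i, Finset.sum_nonneg fun i _ => h0 i, fun i y => (hM i y).trans ?_⟩
  exact Finset.single_le_sum (fun i _ => h0 i) (Finset.mem_univ i)

lemma Aext_hasDerivAt {n : ℕ} {s : ℝ} (hs : 0 < s) {v : En n → ℝ} (hv : Test v)
    (y : En n) {z : ℝ} (hz : 0 < z) :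
    HasDerivAt (Aext n s v y) (-(z ^ (1 - 2 * s) * CSext n s (lapX v) y z)) z := by
  obtain ⟨M0, h00, h0⟩ := hv.bound
  obtain ⟨M1, h10, h1⟩ := Test.bound_fin (fun i => hv.pd i)
  obtain ⟨M2, h20, h2⟩ := Test.bound_fin (fun i => (hv.pd i).pd i)
  have := Kconv_hasDerivAt hs hv.smooth.continuous h0 y hz
  rw [Dker_by_parts (M := M0 + M1 + M2) hs hz (hv.smooth.of_le two_le_topp)
    (fun y => (h0 y).trans (by linarith)) (fun i y => (h1 i y).trans (by linarith))
    (fun i y => (h2 i y).trans (by linarith)) y] at this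
  exact this

/-- integrand of `J` -/
def jint (n : ℕ) (s : ℝ) (v : En n → ℝ) (x : En n) (z : ℝ) (y : En n) : ℝ :=
  2 * Pker n s z (x - y) * (CSext n s v y z - v x) * Aext n s v y z
    - (CSext n s v y z - v x) ^ 2 * Kker n s z (x - y)

/-- its derivative -/
def jder (n : ℕ) (s : ℝ) (v : En n → ℝ) (x : En n) (z : ℝ) (y : En n) : ℝ :=
  2 * z ^ (2 * s - 1) * (Pker n s z (x - y) * (Aext n s v y z) ^ 2)
    - 2 * z ^ (1 - 2 * s) * (Pker n s z (x - y) * ((CSext n s v y z - v x) * CSext n s (lapX v) y z))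
    + z ^ (1 - 2 * s) * (Dker n s z (x - y) * (CSext n s v y z - v x) ^ 2)

lemma jint_hasDerivAt {n : ℕ} {s : ℝ} (hs : 0 < s) {v : En n → ℝ} (hv : Test v)
    (x y : En n) {z : ℝ} (hz : 0 < z) :
    HasDerivAt (fun t => jint n s v x t y) (jder n s v x z y) z := by
  obtain ⟨M0, h00, h0⟩ := hv.bound
  have hP := Pker_hasDerivAt (n := n) (s := s) hz (x - y)
  have hK := Kker_hasDerivAt (n := n) (s := s) hz (x - y)
  have hV := (CSext_hasDerivAt hs hv.smooth.continuous h0 y hz).sub_const (v x)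
  have hA := Aext_hasDerivAt hs hv y hz
  have := (((hP.const_mul 2).mul hV).mul hA).sub ((hV.pow 2).mul hK)
  refine this.congr_deriv ?_
  simp only [jder, Pi.mul_apply, Nat.cast_ofNat, Nat.add_one_sub_one, pow_one]
  simp only [Pi.pow_apply]
  ring

lemma jint_cont {n : ℕ} {s : ℝ} {v : En n → ℝ} (hv : Test v)
    (x : En n) {z : ℝ} (hz : 0 < z) : Continuous (jint n s v x z) := by
  have h1 : Continuous (fun y => Pker n s z (x - y)) := (Pker_cont hz).comp (by fun_prop)
  have h2 : Continuous (fun y => Kker n s z (x - y)) := (Kker_cont hz).comp (by fun_prop)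
  have h3 := (CSext_smooth (s := s) hv.smooth hv.compact hz).continuous
  have h4 := (Aext_smooth (s := s) hv.smooth hv.compact hz).continuous
  unfold jint
  fun_prop

lemma jder_cont {n : ℕ} {s : ℝ} {v : En n → ℝ} (hv : Test v)
    (x : En n) {z : ℝ} (hz : 0 < z) : Continuous (jder n s v x z) := by
  have h1 : Continuous (fun y => Pker n s z (x - y)) := (Pker_cont hz).comp (by fun_prop)
  have h2 : Continuous (fun y => Dker n s z (x - y)) := (Dker_cont hz).comp (by fun_prop)
  have h3 := (CSext_smooth (s := s) hv.smooth hv.compact hz).continuous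
  have h4 := (Aext_smooth (s := s) hv.smooth hv.compact hz).continuous
  have h5 := (CSext_smooth (s := s) hv.lap.smooth hv.lap.compact hz).continuous
  unfold jder
  fun_prop

lemma H_abs_le {n : ℕ} {s z M : ℝ} (hs : 0 < s) (hz : 0 < z) {v : En n → ℝ}
    (hM : ∀ y, |v y| ≤ M) (x y : En n) : |CSext n s v y z - v x| ≤ 2 * M := by
  have h1 := CSext_abs_le hs hz hM y
  have h2 := hM x
  rw [abs_le] at *
  constructor <;> linarith [h1.1, h1.2, h2.1, h2.2]

lemma jint_abs_le {n : ℕ} {s z M : ℝ} (hs : 0 < s) (hz : 0 < z) {v : En n → ℝ}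
    (hM : ∀ y, |v y| ≤ M) (x y : En n) :
    |jint n s v x z y| ≤ (2 * pns n s * (2 * M) * (CK n s * M * crad n ((n : ℝ) + 2 * s))
      + (2 * M) ^ 2 * CK n s) * rad ((n : ℝ) + 2 * s) z (x - y) := by
  have hM0 : 0 ≤ M := (abs_nonneg _).trans (hM 0)
  have h1 := H_abs_le hs hz hM x y
  have h2 := Aext_abs_le hs hz hM y
  have h3 := Kker_abs_le hs hz (x - y)
  have hp := pns_pos (n := n) hs
  have hr := rad_pos (b := (n : ℝ) + 2 * s) hz (x - y)
  have hP := Pker_pos (n := n) hs hz (x - y)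
  have e : z ^ (2 * s) * z ^ (-(2 * s)) = 1 := by rw [← Real.rpow_add hz]; simp
  unfold jint
  refine (abs_sub _ _).trans ?_
  rw [add_mul]
  apply add_le_add
  · rw [abs_mul, abs_mul, abs_mul, abs_two, abs_of_pos hP]
    calc _ ≤ 2 * Pker n s z (x - y) * (2 * M) * (CK n s * M * crad n ((n : ℝ) + 2 * s) * z ^ (-(2 * s))) := by
          gcongr
      _ = _ := by
          rw [Pker_eq]
          linear_combination (2 * pns n s * (2 * M) * (CK n s * M * crad n ((n : ℝ) + 2 * s)) * rad ((n : ℝ) + 2 * s) z (x - y)) * e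
  · rw [abs_mul, abs_pow, mul_assoc]
    gcongr

lemma jint_integrable {n : ℕ} {s : ℝ} (hs : 0 < s) {v : En n → ℝ} (hv : Test v)
    (x : En n) {z : ℝ} (hz : 0 < z) : Integrable (jint n s v x z) := by
  obtain ⟨M0, h00, h0⟩ := hv.bound
  have h1 : Integrable (fun y => rad ((n : ℝ) + 2 * s) z (x - y)) :=
    (rad_integrable hz (by linarith)).comp_sub_left x
  exact (h1.const_mul _).mono' (jint_cont hv x hz).aestronglyMeasurable
    (ae_of_all _ fun y => jint_abs_le hs hz h0 x y)

lemma crp (p : ℝ) : ContinuousOn (fun z : ℝ => z ^ p) (Ioi 0) :=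
  fun _ ht => (Real.continuousAt_rpow_const _ _ (Or.inl (ne_of_gt ht))).continuousWithinAt

lemma J_hasDerivAt {n : ℕ} {s : ℝ} (hs : 0 < s) {v : En n → ℝ} (hv : Test v)
    (x : En n) {z : ℝ} (hz : 0 < z) :
    HasDerivAt (fun t => ∫ y, jint n s v x t y) (∫ y, jder n s v x z y) z := by
  obtain ⟨M, hM0, hM⟩ := hv.bound
  obtain ⟨M2, hM20, hM2⟩ := hv.lap.bound
  refine par_hasDerivAt (b := (n : ℝ) + 2 * s) (C := fun z =>
    2 * z ^ (2 * s - 1) * (pns n s * z ^ (2 * s) * (CK n s * M * crad n ((n : ℝ) + 2 * s) * z ^ (-(2 * s))) ^ 2)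
    + 2 * z ^ (1 - 2 * s) * (pns n s * z ^ (2 * s) * ((2 * M) * M2))
    + z ^ (1 - 2 * s) * (CD n s * z ^ (2 * s) * z ^ (-2 : ℝ) * (2 * M) ^ 2)) x (by linarith)
    (fun z hz => jint_integrable hs hv x hz) (fun z hz => jder_cont hv x hz)
    (fun z hz y => jint_hasDerivAt hs hv x y hz) ?_ ?_ hz
  · intro z hz y
    have h1 := H_abs_le hs hz hM x y
    have h2 := Aext_abs_le hs hz hM y
    have h3 := CSext_abs_le hs hz hM2 y
    have hp := pns_pos (n := n) hs
    have hP := Pker_pos (n := n) hs hz (x - y)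
    have hD : |Dker n s z (x - y)| ≤ CD n s * z ^ (2 * s) * z ^ (-2 : ℝ) * rad ((n : ℝ) + 2 * s) z (x - y) := by
      refine (Dker_abs_le hs hz (x - y)).trans ?_
      have h := sq_mul_rad_le (b := (n : ℝ) + 2 * s) hz (x - y)
      have hcd := CD_pos (n := n) hs
      rw [mul_assoc _ (z ^ (-2 : ℝ))]
      refine mul_le_mul_of_nonneg_left ?_ (by positivity)
      rw [Real.rpow_neg hz.le, inv_mul_eq_div, le_div_iff₀ (by positivity), mul_comm]
      simpa using h
    have z1 := Real.rpow_pos_of_pos hz (1 - 2 * s)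
    have z2 := Real.rpow_pos_of_pos hz (2 * s - 1)
    have e : ∀ a b c : ℝ, |a - b + c| ≤ |a| + |b| + |c| := fun a b c =>
      (abs_add_le _ _).trans (by gcongr; exact abs_sub _ _)
    refine (e _ _ _).trans ?_
    simp only [abs_mul, abs_pow, abs_two, abs_of_pos hP, abs_of_pos z1, abs_of_pos z2]
    calc _ ≤ 2 * z ^ (2 * s - 1) * (Pker n s z (x - y) * (CK n s * M * crad n ((n : ℝ) + 2 * s) * z ^ (-(2 * s))) ^ 2)
          + 2 * z ^ (1 - 2 * s) * (Pker n s z (x - y) * ((2 * M) * M2))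
          + z ^ (1 - 2 * s) * ((CD n s * z ^ (2 * s) * z ^ (-2 : ℝ) * rad ((n : ℝ) + 2 * s) z (x - y)) * (2 * M) ^ 2) := by
          have hD0 := (abs_nonneg _).trans hD
          gcongr
      _ = _ := by
          rw [Pker_eq]; ring
  · have := crp (2 * s - 1)
    have := crp (1 - 2 * s)
    have := crp (2 * s)
    have := crp (-(2 * s))
    have := crp (-2)
    fun_prop

/-- The density in the right-hand side, for the component `v`. -/
def dens (n : ℕ) (s : ℝ) (v : En n → ℝ) (z : ℝ) (y : En n) : ℝ :=
  (z ^ (2 * s - 1) * Aext n s v y z) ^ 2 + ∑ j, CSext n s (pd j v) y z ^ 2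

lemma pd_sub_const {n : ℕ} (f : En n → ℝ) (c : ℝ) (i : Fin n) :
    pd i (fun y => f y - c) = pd i f := by
  ext y; simp only [pd]; rw [fderiv_sub_const]

lemma pd_mul {n : ℕ} {f g : En n → ℝ} (hf : Differentiable ℝ f) (hg : Differentiable ℝ g)
    (i : Fin n) : pd i (fun y => f y * g y) = fun y => f y * pd i g y + g y * pd i f y := by
  ext y
  simp only [pd]
  rw [fderiv_fun_mul (hf y) (hg y)]
  simp

lemma pd_add {n : ℕ} {f g : En n → ℝ} (hf : Differentiable ℝ f) (hg : Differentiable ℝ g)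
    (i : Fin n) : pd i (fun y => f y + g y) = fun y => pd i f y + pd i g y := by
  ext y
  simp only [pd]
  rw [fderiv_fun_add (hf y) (hg y)]
  simp

lemma pd_sq {n : ℕ} {f : En n → ℝ} (hf : Differentiable ℝ f)
    (i : Fin n) : pd i (fun y => f y ^ 2) = fun y => 2 * (f y * pd i f y) := by
  simp_rw [pow_two]
  rw [pd_mul hf hf]; ext y; ring

lemma pd_const_mul {n : ℕ} {f : En n → ℝ} (c : ℝ) (hf : Differentiable ℝ f) (i : Fin n) :
    pd i (fun y => c * f y) = fun y => c * pd i f y := by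
  ext y
  simp only [pd]
  rw [fderiv_const_mul (hf y)]
  simp

lemma CSext_lap {n : ℕ} {s z : ℝ} (hs : 0 < s) (hz : 0 < z) {v : En n → ℝ} (hv : Test v) (y : En n) :
    CSext n s (lapX v) y z = ∑ i, CSext n s (pd i (pd i v)) y z := by
  unfold CSext Pconv lapX
  simp_rw [Finset.mul_sum]
  rw [integral_finsetSum]
  intro i _
  obtain ⟨M, hM0, hM⟩ := ((hv.pd i).pd i).bound
  exact int_mul_bdd (Pker_integrable hs hz) ((hv.pd i).pd i).smooth.continuous hM y

lemma jder_integral {n : ℕ} {s : ℝ} (hs : 0 < s) {v : En n → ℝ} (hv : Test v)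
    (x : En n) {z : ℝ} (hz : 0 < z) :
    ∫ y, jder n s v x z y = 2 * (Pconv n s z (dens n s v z) x * z ^ (1 - 2 * s)) := by
  obtain ⟨M, hM0, hM⟩ := hv.bound
  obtain ⟨M1, hM10, hM1⟩ := Test.bound_fin (fun i => hv.pd i)
  obtain ⟨M2, hM20, hM2⟩ := Test.bound_fin (fun i => (hv.pd i).pd i)
  obtain ⟨M3, hM30, hM3⟩ := hv.lap.bound
  have hS := CSext_smooth (s := s) hv.smooth hv.compact hz
  have hS1 := fun i => CSext_smooth (s := s) (hv.pd i).smooth (hv.pd i).compact hz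
  have hSL := CSext_smooth (s := s) hv.lap.smooth hv.lap.compact hz
  have hA := Aext_smooth (s := s) hv.smooth hv.compact hz
  have htop : ((⊤ : ℕ∞) : WithTop ℕ∞) ≠ 0 := by simp
  have hH : ContDiff ℝ (⊤ : ℕ∞) (fun y => CSext n s v y z - v x) := hS.sub contDiff_const
  have hH2 : ContDiff ℝ (⊤ : ℕ∞) (fun y => (CSext n s v y z - v x) ^ 2) := hH.pow 2
  have e1 : ∀ i, pd i (fun y => (CSext n s v y z - v x) ^ 2)
      = fun y => 2 * ((CSext n s v y z - v x) * CSext n s (pd i v) y z) := by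
    intro i
    rw [pd_sq (hH.differentiable htop), pd_sub_const, CSext_pd hv.smooth hv.compact hz]
  have e2 : ∀ i, pd i (pd i (fun y => (CSext n s v y z - v x) ^ 2))
      = fun y => 2 * ((CSext n s v y z - v x) * CSext n s (pd i (pd i v)) y z
        + CSext n s (pd i v) y z * CSext n s (pd i v) y z) := by
    intro i
    rw [e1, pd_const_mul, pd_mul (hH.differentiable htop) ((hS1 i).differentiable htop), pd_sub_const,
      CSext_pd hv.smooth hv.compact hz, CSext_pd (hv.pd i).smooth (hv.pd i).compact hz]
    exact (hH.differentiable htop).mul ((hS1 i).differentiable htop)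
  have bH := fun y => H_abs_le hs hz hM x y
  have b1 := fun i y => CSext_abs_le hs hz (hM1 i) y
  have b2 := fun i y => CSext_abs_le hs hz (hM2 i) y
  have bP := Dker_by_parts (n := n) (s := s) (z := z) (g := fun y => (CSext n s v y z - v x) ^ 2)
    (M := (2 * M) ^ 2 + 2 * (2 * M * M1) + 2 * (2 * M * M2 + M1 * M1)) hs hz
    (hH2.of_le two_le_topp)
    (fun y => by
      rw [abs_pow]
      have : |CSext n s v y z - v x| ^ 2 ≤ (2 * M) ^ 2 := by gcongr; exact bH y
      have : 0 ≤ 2 * (2 * M * M1) + 2 * (2 * M * M2 + M1 * M1) := by positivity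
      linarith)
    (fun i y => by
      rw [e1 i]; simp only [abs_mul, abs_two]
      have : |CSext n s v y z - v x| * |CSext n s (pd i v) y z| ≤ 2 * M * M1 := by
        gcongr
        · exact bH y
        · exact b1 i y
      have : 0 ≤ (2 * M) ^ 2 + 2 * (2 * M * M2 + M1 * M1) := by positivity
      linarith)
    (fun i y => by
      rw [e2 i]
      have h1 : |(CSext n s v y z - v x) * CSext n s (pd i (pd i v)) y z
        + CSext n s (pd i v) y z * CSext n s (pd i v) y z| ≤ 2 * M * M2 + M1 * M1 := by
        refine (abs_add_le _ _).trans ?_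
        rw [abs_mul, abs_mul]
        gcongr
        · exact bH y
        · exact b2 i y
        · exact b1 i y
        · exact b1 i y
      have : 0 ≤ (2 * M) ^ 2 + 2 * (2 * M * M1) := by positivity
      rw [abs_mul, abs_two]
      linarith) x
  have eL : ∀ y, lapX (fun y => (CSext n s v y z - v x) ^ 2) y
      = 2 * ((CSext n s v y z - v x) * CSext n s (lapX v) y z) + 2 * ∑ i, CSext n s (pd i v) y z ^ 2 := by
    intro y
    rw [CSext_lap hs hz hv, lapX]
    simp_rw [e2, mul_add, Finset.sum_add_distrib, Finset.mul_sum, pow_two]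
  have bA := fun y => Aext_abs_le hs hz hM y
  have bL := fun y => CSext_abs_le hs hz hM3 y
  have hPi := Pker_integrable (n := n) hs hz
  have i1 : Integrable (fun y => Pker n s z (x - y) * (Aext n s v y z) ^ 2) :=
    int_mul_bdd hPi (hA.continuous.pow 2) (M := (CK n s * M * crad n ((n : ℝ) + 2 * s) * z ^ (-(2 * s))) ^ 2)
      (fun y => by simp only [Pi.pow_apply]; rw [abs_pow]; gcongr; exact bA y) x
  have i2 : Integrable (fun y => Pker n s z (x - y) * ((CSext n s v y z - v x) * CSext n s (lapX v) y z)) :=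
    int_mul_bdd hPi (hH.continuous.mul hSL.continuous) (M := (2 * M) * M3)
      (fun y => by
        simp only [Pi.mul_apply]
        rw [abs_mul]; gcongr
        · exact bH y
        · exact bL y) x
  have i3 : Integrable (fun y => Dker n s z (x - y) * (CSext n s v y z - v x) ^ 2) :=
    int_mul_bdd (Dker_integrable hs hz) hH2.continuous (M := (2 * M) ^ 2)
      (fun y => by rw [abs_pow]; gcongr; exact bH y) x
  have i4 : Integrable (fun y => Pker n s z (x - y) * ∑ i, CSext n s (pd i v) y z ^ 2) :=
    int_mul_bdd hPi (continuous_finsetSum _ fun i _ => (hS1 i).continuous.pow 2)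
      (M := ∑ i : Fin n, M1 ^ 2)
      (fun y => (Finset.abs_sum_le_sum_abs _ _).trans (Finset.sum_le_sum fun i _ => by
        simp only [Pi.pow_apply]; rw [abs_pow]; gcongr; exact b1 i y)) x
  unfold jder
  rw [integral_add, integral_sub, integral_const_mul, integral_const_mul, integral_const_mul, bP]
  rotate_left
  · exact i1.const_mul _
  · exact i2.const_mul _
  · exact (i1.const_mul _).sub (i2.const_mul _)
  · exact i3.const_mul _
  have eq1 : ∫ y, Pker n s z (x - y) * lapX (fun y => (CSext n s v y z - v x) ^ 2) y
      = 2 * (∫ y, Pker n s z (x - y) * ((CSext n s v y z - v x) * CSext n s (lapX v) y z))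
        + 2 * ∫ y, Pker n s z (x - y) * ∑ i, CSext n s (pd i v) y z ^ 2 := by
    rw [← integral_const_mul, ← integral_const_mul, ← integral_add (i2.const_mul _) (i4.const_mul _)]
    refine integral_congr_ae (ae_of_all _ fun y => ?_)
    simp only [eL]; ring
  have eq2 : Pconv n s z (dens n s v z) x
      = (z ^ (2 * s - 1)) ^ 2 * (∫ y, Pker n s z (x - y) * (Aext n s v y z) ^ 2)
        + ∫ y, Pker n s z (x - y) * ∑ i, CSext n s (pd i v) y z ^ 2 := by
    rw [← integral_const_mul, ← integral_add (i1.const_mul _) i4, Pconv]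
    refine integral_congr_ae (ae_of_all _ fun y => ?_)
    simp only [dens]; ring
  have e : z ^ (2 * s - 1) * z ^ (1 - 2 * s) = 1 := by rw [← Real.rpow_add hz]; simp
  rw [eq1, eq2]
  linear_combination (-2 * z ^ (2 * s - 1) * (∫ y, Pker n s z (x - y) * (Aext n s v y z) ^ 2)) * e

lemma dens_conv_nonneg {n : ℕ} {s : ℝ} (hs : 0 < s) {v : En n → ℝ}
    (x : En n) {z : ℝ} (hz : 0 < z) : 0 ≤ Pconv n s z (dens n s v z) x * z ^ (1 - 2 * s) := by
  refine mul_nonneg (integral_nonneg fun y => mul_nonneg (Pker_pos hs hz _).le ?_)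
    (Real.rpow_pos_of_pos hz _).le
  unfold dens
  have : 0 ≤ ∑ j, CSext n s (pd j v) y z ^ 2 := Finset.sum_nonneg fun _ _ => sq_nonneg _
  positivity



lemma Test.holder {n : ℕ} {v : En n → ℝ} (hv : Test v) {θ : ℝ} (h0 : 0 < θ) (h1 : θ ≤ 1) :
    ∃ L, 0 ≤ L ∧ ∀ a b, |v a - v b| ≤ L * ‖a - b‖ ^ θ := by
  obtain ⟨M, hM0, hM⟩ := hv.bound
  obtain ⟨K, hK⟩ := ContDiff.lipschitzWith_of_hasCompactSupport hv.compact hv.smooth (by simp)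
  refine ⟨K + 2 * M, by positivity, fun a b => ?_⟩
  rcases le_total ‖a - b‖ 1 with h | h
  · have e1 : |v a - v b| ≤ K * ‖a - b‖ := by
      have := hK.dist_le_mul a b
      rwa [Real.dist_eq, dist_eq_norm] at this
    have e2 : ‖a - b‖ ≤ ‖a - b‖ ^ θ := by
      have := Real.rpow_le_rpow_of_exponent_ge_of_imp (norm_nonneg (a - b)) h h1 (by intro _ h3; linarith)
      simpa using this
    calc |v a - v b| ≤ K * ‖a - b‖ := e1
      _ ≤ K * ‖a - b‖ ^ θ := by gcongr
      _ ≤ _ := by gcongr; linarith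
  · have e2 : 1 ≤ ‖a - b‖ ^ θ := Real.one_le_rpow h h0.le
    have e1 : |v a - v b| ≤ 2 * M := (abs_sub _ _).trans (by linarith [hM a, hM b])
    calc |v a - v b| ≤ (2 * M) * 1 := by linarith
      _ ≤ (K + 2 * M) * ‖a - b‖ ^ θ := by
        apply mul_le_mul _ e2 zero_le_one (by positivity)
        have := K.2
        linarith [K.coe_nonneg]

/-- Convolution estimate with a Hölder function. -/
lemma conv_holder {n : ℕ} {s z θ C L : ℝ} (hz : 0 < z) (h0 : 0 < θ) (hθ : θ < 2 * s)
    {k v : En n → ℝ} (hk : ∀ w, |k w| ≤ C * rad ((n : ℝ) + 2 * s) z w) (hC : 0 ≤ C) (hL : 0 ≤ L)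
    (hv : ∀ a b, |v a - v b| ≤ L * ‖a - b‖ ^ θ) (y : En n) :
    |∫ w, k (y - w) * (v w - v y)| ≤ C * L * (z ^ (θ - 2 * s) * crad n ((n : ℝ) + 2 * s - θ)) := by
  have hi : Integrable (fun w : En n => rad ((n : ℝ) + 2 * s - θ) z (y - w)) :=
    (rad_integrable hz (by linarith)).comp_sub_left y
  rw [← Real.norm_eq_abs]
  refine (norm_integral_le_of_norm_le (hi.const_mul (C * L)) (ae_of_all _ fun w => ?_)).trans ?_
  · rw [Real.norm_eq_abs, abs_mul]
    calc |k (y - w)| * |v w - v y| ≤ (C * rad ((n : ℝ) + 2 * s) z (y - w)) * (L * ‖y - w‖ ^ θ) := by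
          have := (abs_nonneg _).trans (hk (y - w))
          gcongr
          · exact hk _
          · rw [norm_sub_rev]; exact hv w y
      _ = C * L * (‖y - w‖ ^ θ * rad ((n : ℝ) + 2 * s) z (y - w)) := by ring
      _ ≤ _ := by
          gcongr
          exact norm_rpow_mul_rad_le hz h0.le _
  · rw [integral_const_mul, integral_sub_left_eq_self (fun w => rad ((n : ℝ) + 2 * s - θ) z w) volume y,
      rad_integral hz, crad]
    ring_nf
    exact le_rfl

lemma Pker_abs_le {n : ℕ} {s z : ℝ} (hs : 0 < s) (hz : 0 < z) (w : En n) :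
    |Pker n s z w| ≤ pns n s * z ^ (2 * s) * rad ((n : ℝ) + 2 * s) z w := by
  rw [abs_of_pos (Pker_pos hs hz w), Pker_eq]

lemma conv_sub_const {n : ℕ} {k v : En n → ℝ} (hk : Integrable k) (hv : Test v) (y : En n) :
    ∫ w, k (y - w) * (v w - v y) = (∫ w, k (y - w) * v w) - (∫ w, k w) * v y := by
  obtain ⟨M, hM0, hM⟩ := hv.bound
  simp_rw [mul_sub]
  rw [integral_sub (int_mul_bdd hk hv.smooth.continuous hM y) ((hk.comp_sub_left y).mul_const _),
    integral_mul_const, integral_sub_left_eq_self k volume y]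

lemma CSext_holder {n : ℕ} {s z θ L : ℝ} (hs : 0 < s) (hz : 0 < z) (h0 : 0 < θ) (hθ : θ < 2 * s)
    {v : En n → ℝ} (hT : Test v) (hL : 0 ≤ L)
    (hv : ∀ a b, |v a - v b| ≤ L * ‖a - b‖ ^ θ) (y : En n) :
    |CSext n s v y z - v y| ≤ pns n s * L * crad n ((n : ℝ) + 2 * s - θ) * z ^ θ := by
  have h := conv_holder hz h0 hθ (Pker_abs_le hs hz) (by have := pns_pos (n := n) hs; positivity) hL hv y
  rw [conv_sub_const (Pker_integrable hs hz) hT, Pker_integral hs hz, one_mul] at h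
  refine h.trans (le_of_eq ?_)
  have e : z ^ (2 * s) * z ^ (θ - 2 * s) = z ^ θ := by rw [← Real.rpow_add hz]; congr 1; ring
  linear_combination (pns n s * L * crad n ((n : ℝ) + 2 * s - θ)) * e

lemma Aext_holder {n : ℕ} {s z θ L : ℝ} (hs : 0 < s) (hz : 0 < z) (h0 : 0 < θ) (hθ : θ < 2 * s)
    {v : En n → ℝ} (hT : Test v) (hL : 0 ≤ L)
    (hv : ∀ a b, |v a - v b| ≤ L * ‖a - b‖ ^ θ) (y : En n) :
    |Aext n s v y z| ≤ CK n s * L * crad n ((n : ℝ) + 2 * s - θ) * z ^ (θ - 2 * s) := by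
  have h := conv_holder hz h0 hθ (Kker_abs_le hs hz) (CK_pos hs).le hL hv y
  rw [conv_sub_const (Kker_integrable hs hz) hT, Kker_integral hs hz, zero_mul, sub_zero] at h
  refine h.trans (le_of_eq ?_)
  ring

/-- Singular weight. -/
def swt (n : ℕ) (s p : ℝ) (h : En n) : ℝ :=
  min (‖h‖ ^ (p - ((n : ℝ) + 2 * s))) (‖h‖ ^ (-((n : ℝ) + 2 * s)))

lemma swt_integrable {n : ℕ} (hn : 1 ≤ n) {s p : ℝ} (hs : 0 < s) (hp : 2 * s < p) :
    Integrable (swt n s p) := by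
  have : Nonempty (Fin n) := ⟨⟨0, hn⟩⟩
  have : Nontrivial (En n) := inferInstance
  have key := integrable_fun_norm_addHaar (volume : Measure (En n))
    (f := fun r : ℝ => min (r ^ (p - ((n : ℝ) + 2 * s))) (r ^ (-((n : ℝ) + 2 * s))))
  refine key.2 ?_
  have hd : Module.finrank ℝ (En n) = n := by simp
  rw [hd]
  have hm : Measurable (fun r : ℝ => r ^ (n - 1) • min (r ^ (p - ((n : ℝ) + 2 * s))) (r ^ (-((n : ℝ) + 2 * s)))) := by
    fun_prop
  have hpow : ∀ r : ℝ, 0 < r → r ^ (n - 1) = r ^ ((n : ℝ) - 1) := fun r hr => by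
    rw [← Real.rpow_natCast, Nat.cast_sub hn, Nat.cast_one]
  rw [← Ioc_union_Ioi_eq_Ioi zero_le_one]
  refine IntegrableOn.union ?_ ?_
  · have h1 : IntegrableOn (fun r : ℝ => r ^ (p - 2 * s - 1)) (Ioc 0 1) :=
      (intervalIntegrable_iff_integrableOn_Ioc_of_le zero_le_one).1
        (intervalIntegral.intervalIntegrable_rpow' (by linarith))
    refine Integrable.mono' h1 hm.aestronglyMeasurable ?_
    filter_upwards [ae_restrict_mem measurableSet_Ioc] with r hr
    have hr0 := hr.1
    rw [Real.norm_eq_abs, abs_of_nonneg (by simp only [smul_eq_mul]; positivity), hpow r hr0, smul_eq_mul]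
    calc _ ≤ r ^ ((n : ℝ) - 1) * r ^ (p - ((n : ℝ) + 2 * s)) := by gcongr; exact min_le_left _ _
      _ = _ := by rw [← Real.rpow_add hr0]; congr 1; ring
  · have h1 : IntegrableOn (fun r : ℝ => r ^ (-(2 * s) - 1)) (Ioi 1) :=
      integrableOn_Ioi_rpow_of_lt (by linarith) one_pos
    refine Integrable.mono' h1 hm.aestronglyMeasurable ?_
    filter_upwards [ae_restrict_mem measurableSet_Ioi] with r hr
    have hr0 : 0 < r := lt_trans one_pos hr
    rw [Real.norm_eq_abs, abs_of_nonneg (by simp only [smul_eq_mul]; positivity), hpow r hr0, smul_eq_mul]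
    calc _ ≤ r ^ ((n : ℝ) - 1) * r ^ (-((n : ℝ) + 2 * s)) := by gcongr; exact min_le_right _ _
      _ = _ := by rw [← Real.rpow_add hr0]; congr 1; ring

lemma rad_le_norm {n : ℕ} {b z : ℝ} (hb : 0 ≤ b) {w : En n} (hw : w ≠ 0) :
    rad b z w ≤ ‖w‖ ^ (-b) := by
  have h1 : 0 < ‖w‖ := norm_pos_iff.2 hw
  have : ‖w‖ ^ (-b) = (‖w‖ ^ 2) ^ (-b / 2) := by
    rw [← Real.rpow_natCast, ← Real.rpow_mul h1.le]; congr 1; push_cast; ring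
  rw [this, rad]
  apply Real.rpow_le_rpow_of_nonpos (by positivity)
  · nlinarith [sq_nonneg z]
  · linarith

lemma rad_tendsto {n : ℕ} {b : ℝ} {w : En n} (hw : w ≠ 0) :
    Tendsto (fun z => rad b z w) (𝓝[>] 0) (𝓝 (‖w‖ ^ (-b))) := by
  have h1 : 0 < ‖w‖ := norm_pos_iff.2 hw
  have e : ‖w‖ ^ (-b) = rad b 0 w := by
    rw [rad, ← Real.rpow_natCast, zero_pow (by norm_num), add_zero, ← Real.rpow_mul h1.le]
    congr 1; push_cast; ring
  rw [e]
  apply tendsto_nhdsWithin_of_tendsto_nhds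
  have : ContinuousAt (fun z => rad b z w) 0 := by
    unfold rad
    apply ContinuousAt.rpow_const
    · fun_prop
    · left; positivity
  exact this

lemma Kker_tendsto {n : ℕ} {s : ℝ} {w : En n} (hw : w ≠ 0) :
    Tendsto (fun z => Kker n s z w) (𝓝[>] 0) (𝓝 (pns n s * (2 * s * ‖w‖ ^ (-((n : ℝ) + 2 * s))))) := by
  have h1 := rad_tendsto (b := (n : ℝ) + 2 * s) hw
  have h2 := rad_tendsto (b := (n : ℝ) + 2 * s + 2) hw
  have h3 : Tendsto (fun z : ℝ => z ^ 2) (𝓝[>] 0) (𝓝 0) := by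
    apply tendsto_nhdsWithin_of_tendsto_nhds
    have : ContinuousAt (fun z : ℝ => z ^ 2) 0 := by fun_prop
    simpa [ContinuousAt] using this
  have := ((h1.const_mul (2 * s)).sub ((h3.const_mul ((n : ℝ) + 2 * s)).mul h2)).const_mul (pns n s)
  simpa [Kker] using this

/-- The quadratic form at a point. -/
def Qint (n : ℕ) (s : ℝ) (v : En n → ℝ) (x : En n) : ℝ :=
  ∫ y, (v x - v y) ^ 2 / ‖x - y‖ ^ ((n : ℝ) + 2 * s)

lemma rpow_tendsto_zero {p : ℝ} (hp : 0 < p) : Tendsto (fun z : ℝ => z ^ p) (𝓝[>] 0) (𝓝 0) := by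
  apply tendsto_nhdsWithin_of_tendsto_nhds
  have : ContinuousAt (fun z : ℝ => z ^ p) 0 := Real.continuousAt_rpow_const _ _ (Or.inr hp.le)
  simpa [ContinuousAt, Real.zero_rpow hp.ne'] using this

lemma exists_theta {s : ℝ} (h0 : 0 < s) (h1 : s < 1) :
    ∃ θ : ℝ, 0 < θ ∧ s < θ ∧ θ < 2 * s ∧ θ ≤ 1 ∧ 2 * θ ≤ 1 + 2 * s := by
  refine ⟨min 1 (3 * s / 2), ?_, ?_, ?_, min_le_left _ _, ?_⟩
  · apply lt_min <;> linarith
  · apply lt_min <;> linarith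
  · exact (min_le_right _ _).trans_lt (by linarith)
  · linarith [min_le_right 1 (3 * s / 2)]

lemma J_first {n : ℕ} {s : ℝ} (h0 : 0 < s) (h1 : s < 1) {v : En n → ℝ} (hv : Test v)
    (x : En n) : Tendsto (fun z => ∫ y, 2 * Pker n s z (x - y) * (CSext n s v y z - v x) * Aext n s v y z)
      (𝓝[>] 0) (𝓝 0) := by
  obtain ⟨θ, t0, t1, t2, t3, t4⟩ := exists_theta h0 h1
  obtain ⟨L, hL, hh⟩ := hv.holder t0 t3
  set c := crad n ((n : ℝ) + 2 * s - θ) with hc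
  have hc0 : 0 ≤ c := crad_nonneg
  have hp := pns_pos (n := n) h0
  have hCK := CK_pos (n := n) h0
  have hlim : Tendsto (fun z : ℝ => 4 * (pns n s * L * c) * (CK n s * L * c) * z ^ (2 * (θ - s))) (𝓝[>] 0) (𝓝 0) := by
    simpa using (rpow_tendsto_zero (p := 2 * (θ - s)) (by linarith)).const_mul _
  refine squeeze_zero_norm' ?_ hlim
  filter_upwards [self_mem_nhdsWithin] with z hz
  replace hz : 0 < z := hz
  have hi1 : Integrable (fun y => Pker n s z (x - y)) := (Pker_integrable h0 hz).comp_sub_left x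
  have hi2 : Integrable (fun w : En n => rad ((n : ℝ) + 2 * s - θ) z (x - w)) :=
    (rad_integrable hz (by linarith)).comp_sub_left x
  set B := CK n s * L * c * z ^ (θ - 2 * s) with hB
  refine (norm_integral_le_of_norm_le (((hi1.const_mul (2 * (pns n s * L * c * z ^ θ) * B))).add
    (hi2.const_mul (2 * (pns n s * z ^ (2 * s) * L) * B))) (ae_of_all _ fun y => ?_)).trans ?_
  · have hP := Pker_pos (n := n) h0 hz (x - y)
    have hA := Aext_holder h0 hz t0 t2 hv hL hh y
    have hC := CSext_holder h0 hz t0 t2 hv hL hh y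
    have hH : |CSext n s v y z - v x| ≤ pns n s * L * c * z ^ θ + L * ‖x - y‖ ^ θ := by
      have := hh y x
      rw [norm_sub_rev] at this
      calc _ = |(CSext n s v y z - v y) + (v y - v x)| := by congr 1; ring
        _ ≤ _ := (abs_add_le _ _).trans (add_le_add hC this)
    have hr := norm_rpow_mul_rad_le (b := (n : ℝ) + 2 * s) hz t0.le (x - y)
    rw [Real.norm_eq_abs, abs_mul, abs_mul, abs_mul, abs_two, abs_of_pos hP]
    simp only [Pi.add_apply]
    calc _ ≤ 2 * Pker n s z (x - y) * (pns n s * L * c * z ^ θ + L * ‖x - y‖ ^ θ) * B := by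
          gcongr
      _ = 2 * (pns n s * L * c * z ^ θ) * B * Pker n s z (x - y)
          + 2 * (pns n s * z ^ (2 * s) * L) * B * (‖x - y‖ ^ θ * rad ((n : ℝ) + 2 * s) z (x - y)) := by
          rw [Pker_eq]; ring
      _ ≤ _ := by gcongr
  · have E1 : ∫ y, Pker n s z (x - y) = 1 := by
      rw [integral_sub_left_eq_self (fun w => Pker n s z w) volume x, Pker_integral h0 hz]
    have E2 : ∫ y : En n, rad ((n : ℝ) + 2 * s - θ) z (x - y) = z ^ (θ - 2 * s) * c := by
      rw [integral_sub_left_eq_self (fun w => rad ((n : ℝ) + 2 * s - θ) z w) volume x,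
        rad_integral hz, hc, crad]
      congr 2; ring
    simp only [Pi.add_apply]
    rw [integral_add (hi1.const_mul _) (hi2.const_mul _), integral_const_mul, integral_const_mul, E1, E2, hB]
    have e1 : z ^ (2 * s) * z ^ (θ - 2 * s) = z ^ θ := by rw [← Real.rpow_add hz]; congr 1; ring
    have e2 : z ^ θ * z ^ (θ - 2 * s) = z ^ (2 * (θ - s)) := by rw [← Real.rpow_add hz]; congr 1; ring
    apply le_of_eq
    linear_combination (2 * (pns n s * L * c) * (CK n s * L * c) * z ^ (θ - 2 * s)) * e1
      + (4 * (pns n s * L * c) * (CK n s * L * c)) * e2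

lemma J_second {n : ℕ} (hn : 1 ≤ n) {s : ℝ} (h0 : 0 < s) (h1 : s < 1) {v : En n → ℝ} (hv : Test v)
    (x : En n) : Tendsto (fun z => ∫ y, (CSext n s v y z - v x) ^ 2 * Kker n s z (x - y))
      (𝓝[>] 0) (𝓝 (2 * (s * pns n s * Qint n s v x))) := by
  have : Nonempty (Fin n) := ⟨⟨0, hn⟩⟩
  have : Nontrivial (En n) := inferInstance
  obtain ⟨θ, t0, t1, t2, t3, t4⟩ := exists_theta h0 h1
  obtain ⟨L, hL, hh⟩ := hv.holder t0 t3
  obtain ⟨M, hM0, hM⟩ := hv.bound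
  set c := crad n ((n : ℝ) + 2 * s - θ) with hc
  have hc0 : 0 ≤ c := crad_nonneg
  have hp := pns_pos (n := n) h0
  have hCK := CK_pos (n := n) h0
  have hn1 : (1 : ℝ) ≤ n := by exact_mod_cast hn
  set a := pns n s * L * c with ha
  have ha0 : 0 ≤ a := by positivity
  have hne : ∀ᵐ y : En n, y ≠ x := by
    simp [ae_iff, measure_singleton]
  have hlim_eq : 2 * (s * pns n s * Qint n s v x)
      = ∫ y, (v y - v x) ^ 2 * (pns n s * (2 * s * ‖x - y‖ ^ (-((n : ℝ) + 2 * s)))) := by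
    rw [Qint, ← mul_assoc, ← integral_const_mul]
    refine integral_congr_ae (ae_of_all _ fun y => ?_)
    simp only
    rw [Real.rpow_neg (norm_nonneg _)]
    ring
  rw [hlim_eq]
  set C := (2 * a ^ 2 + 2 * L ^ 2 + (2 * M) ^ 2) * CK n s with hC
  refine tendsto_integral_filter_of_dominated_convergence (fun y => C * swt n s (2 * θ) (x - y))
    ?_ ?_ (((swt_integrable hn h0 (by linarith)).comp_sub_left x).const_mul C) ?_
  · filter_upwards [self_mem_nhdsWithin] with z hz
    replace hz : 0 < z := hz
    have e1 := (CSext_smooth (s := s) hv.smooth hv.compact hz).continuous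
    have e2 : Continuous (fun y => Kker n s z (x - y)) := (Kker_cont hz).comp (by fun_prop)
    have : Continuous (fun y => (CSext n s v y z - v x) ^ 2 * Kker n s z (x - y)) := by fun_prop
    exact this.aestronglyMeasurable
  · filter_upwards [self_mem_nhdsWithin] with z hz
    replace hz : 0 < z := hz
    filter_upwards [hne] with y hy
    have hxy : x - y ≠ 0 := sub_ne_zero.2 (Ne.symm hy)
    have hC' := CSext_holder h0 hz t0 t2 hv hL hh y
    have hH : |CSext n s v y z - v x| ≤ a * z ^ θ + L * ‖x - y‖ ^ θ := by
      have := hh y x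
      rw [norm_sub_rev] at this
      calc _ = |(CSext n s v y z - v y) + (v y - v x)| := by congr 1; ring
        _ ≤ _ := (abs_add_le _ _).trans (add_le_add hC' this)
    have hH2 := H_abs_le h0 hz hM x y
    have hK := Kker_abs_le h0 hz (x - y)
    have hr := rad_pos (b := (n : ℝ) + 2 * s) hz (x - y)
    rw [Real.norm_eq_abs, abs_mul, abs_pow, swt, mul_min_of_nonneg _ _ (by positivity : (0:ℝ) ≤ C)]
    apply le_min
    · have q1 := norm_rpow_mul_rad_le (b := (n : ℝ) + 2 * s) hz (by linarith : 0 ≤ 2 * θ) (x - y)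
      have q2 := z_rpow_mul_rad_le (b := (n : ℝ) + 2 * s) hz (by linarith : 0 ≤ 2 * θ) (x - y)
      have q3 := rad_le_norm (b := (n : ℝ) + 2 * s - 2 * θ) (z := z) (by linarith) hxy
      have sq : ∀ t : ℝ, 0 ≤ t → (t ^ θ) ^ 2 = t ^ (2 * θ) := fun t ht => by
        rw [← Real.rpow_natCast, ← Real.rpow_mul ht]; congr 1; push_cast; ring
      have q5 : (a * z ^ θ + L * ‖x - y‖ ^ θ) ^ 2 ≤ 2 * a ^ 2 * z ^ (2 * θ) + 2 * L ^ 2 * ‖x - y‖ ^ (2 * θ) := by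
        rw [← sq z hz.le, ← sq _ (norm_nonneg _)]
        nlinarith [sq_nonneg (a * z ^ θ - L * ‖x - y‖ ^ θ)]
      calc _ ≤ (a * z ^ θ + L * ‖x - y‖ ^ θ) ^ 2 * (CK n s * rad ((n : ℝ) + 2 * s) z (x - y)) := by gcongr
        _ ≤ (2 * a ^ 2 * z ^ (2 * θ) + 2 * L ^ 2 * ‖x - y‖ ^ (2 * θ)) * (CK n s * rad ((n : ℝ) + 2 * s) z (x - y)) := by
            gcongr
        _ = CK n s * (2 * a ^ 2 * (z ^ (2 * θ) * rad ((n : ℝ) + 2 * s) z (x - y))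
            + 2 * L ^ 2 * (‖x - y‖ ^ (2 * θ) * rad ((n : ℝ) + 2 * s) z (x - y))) := by ring
        _ ≤ CK n s * (2 * a ^ 2 * rad ((n : ℝ) + 2 * s - 2 * θ) z (x - y)
            + 2 * L ^ 2 * rad ((n : ℝ) + 2 * s - 2 * θ) z (x - y)) := by gcongr
        _ = (2 * a ^ 2 + 2 * L ^ 2) * CK n s * rad ((n : ℝ) + 2 * s - 2 * θ) z (x - y) := by ring
        _ ≤ C * ‖x - y‖ ^ (-((n : ℝ) + 2 * s - 2 * θ)) := by
            have : 0 ≤ rad ((n : ℝ) + 2 * s - 2 * θ) z (x - y) := (rad_pos hz _).le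
            have hle : 2 * a ^ 2 + 2 * L ^ 2 ≤ 2 * a ^ 2 + 2 * L ^ 2 + (2 * M) ^ 2 := by
              nlinarith [sq_nonneg (2 * M)]
            rw [hC]
            exact mul_le_mul (mul_le_mul_of_nonneg_right hle hCK.le) q3 this (by positivity)
        _ = _ := by congr 2; ring
    · have q3 := rad_le_norm (b := (n : ℝ) + 2 * s) (z := z) (by linarith) hxy
      calc _ ≤ (2 * M) ^ 2 * (CK n s * rad ((n : ℝ) + 2 * s) z (x - y)) := by gcongr
        _ = (2 * M) ^ 2 * CK n s * rad ((n : ℝ) + 2 * s) z (x - y) := by ring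
        _ ≤ _ := by
          rw [hC]
          gcongr
          nlinarith [sq_nonneg a, sq_nonneg L]
  · filter_upwards [hne] with y hy
    have hxy : x - y ≠ 0 := sub_ne_zero.2 (Ne.symm hy)
    refine Tendsto.mul (Tendsto.pow (Tendsto.sub_const ?_ _) 2) (Kker_tendsto hxy)
    rw [tendsto_iff_norm_sub_tendsto_zero]
    have hl : Tendsto (fun z : ℝ => a * z ^ θ) (𝓝[>] 0) (𝓝 0) := by
      simpa using (rpow_tendsto_zero t0).const_mul a
    refine squeeze_zero' (Eventually.of_forall fun _ => norm_nonneg _) ?_ hl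
    filter_upwards [self_mem_nhdsWithin] with z hz
    exact CSext_holder h0 hz t0 t2 hv hL hh y

lemma J_zero {n : ℕ} (hn : 1 ≤ n) {s : ℝ} (h0 : 0 < s) (h1 : s < 1) {v : En n → ℝ} (hv : Test v)
    (x : En n) : Tendsto (fun z => ∫ y, jint n s v x z y)
      (𝓝[>] 0) (𝓝 (-(2 * (s * pns n s * Qint n s v x)))) := by
  have h := (J_first h0 h1 hv x).sub (J_second hn h0 h1 hv x)
  rw [zero_sub] at h
  refine h.congr' ?_
  filter_upwards [self_mem_nhdsWithin] with z hz
  replace hz : 0 < z := hz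
  obtain ⟨M, hM0, hM⟩ := hv.bound
  have e1 := (CSext_smooth (s := s) hv.smooth hv.compact hz).continuous
  have e2 := (Aext_smooth (s := s) hv.smooth hv.compact hz).continuous
  rw [← integral_sub]
  · rfl
  · have := (int_mul_bdd (Pker_integrable h0 hz) (g := fun y => (CSext n s v y z - v x) * Aext n s v y z)
      (by fun_prop) (M := (2 * M) * (CK n s * M * crad n ((n : ℝ) + 2 * s) * z ^ (-(2 * s))))
      (fun y => by
        rw [abs_mul]
        gcongr
        · exact H_abs_le h0 hz hM x y
        · exact Aext_abs_le h0 hz hM y) x).const_mul 2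
    refine this.congr (ae_of_all _ fun y => ?_)
    simp only; ring
  · have := (int_mul_bdd (Kker_integrable h0 hz) (g := fun y => (CSext n s v y z - v x) ^ 2)
      (by fun_prop) (M := (2 * M) ^ 2)
      (fun y => by
        rw [abs_pow]
        gcongr
        · exact H_abs_le h0 hz hM x y) x)
    refine this.congr (ae_of_all _ fun y => ?_)
    simp only; ring

lemma J_top {n : ℕ} {s : ℝ} (h0 : 0 < s) {v : En n → ℝ} (hv : Test v)
    (x : En n) : Tendsto (fun z => ∫ y, jint n s v x z y) atTop (𝓝 0) := by
  obtain ⟨M, hM0, hM⟩ := hv.bound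
  set C := (2 * pns n s * (2 * M) * (CK n s * M * crad n ((n : ℝ) + 2 * s))
      + (2 * M) ^ 2 * CK n s) with hC
  have hl : Tendsto (fun z : ℝ => C * crad n ((n : ℝ) + 2 * s) * z ^ (-(2 * s))) atTop (𝓝 0) := by
    simpa using (tendsto_rpow_neg_atTop (by linarith : 0 < 2 * s)).const_mul
      (C * crad n ((n : ℝ) + 2 * s))
  refine squeeze_zero_norm' ?_ hl
  filter_upwards [eventually_gt_atTop 0] with z hz
  have hi : Integrable (fun w : En n => rad ((n : ℝ) + 2 * s) z (x - w)) :=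
    (rad_integrable hz (by linarith)).comp_sub_left x
  refine (norm_integral_le_of_norm_le (hi.const_mul C)
    (ae_of_all _ fun y => jint_abs_le h0 hz hM x y)).trans (le_of_eq ?_)
  rw [integral_const_mul, integral_sub_left_eq_self (fun w => rad ((n : ℝ) + 2 * s) z w) volume x,
    rad_integral hz, crad]
  ring_nf

/-- Main energy identity for a single test function. -/
lemma energy {n : ℕ} (hn : 1 ≤ n) {s : ℝ} (h0 : 0 < s) (h1 : s < 1) {v : En n → ℝ} (hv : Test v)
    (x : En n) : IntegrableOn (fun z => Pconv n s z (dens n s v z) x * z ^ (1 - 2 * s)) (Ioi 0) ∧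
      ∫ z in Ioi (0 : ℝ), Pconv n s z (dens n s v z) x * z ^ (1 - 2 * s) = s * pns n s * Qint n s v x := by
  set l := -(2 * (s * pns n s * Qint n s v x)) with hl
  set J := Function.update (fun z => ∫ y, jint n s v x z y) 0 l with hJ
  have hJe : ∀ z, 0 < z → J =ᶠ[𝓝 z] (fun z => ∫ y, jint n s v x z y) := fun z hz => by
    filter_upwards [lt_mem_nhds hz] with t ht
    rw [hJ, Function.update_of_ne ht.ne']
  have hcont : ContinuousWithinAt J (Ici 0) 0 := by
    rw [hJ, continuousWithinAt_update_same]
    simpa using J_zero hn h0 h1 hv x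
  have hder : ∀ z ∈ Ioi (0 : ℝ), HasDerivAt J (2 * (Pconv n s z (dens n s v z) x * z ^ (1 - 2 * s))) z := by
    intro z hz
    rw [← jder_integral h0 hv x hz]
    exact (J_hasDerivAt h0 hv x hz).congr_of_eventuallyEq (hJe z hz)
  have hpos : ∀ z ∈ Ioi (0 : ℝ), 0 ≤ 2 * (Pconv n s z (dens n s v z) x * z ^ (1 - 2 * s)) := fun z hz =>
    mul_nonneg zero_le_two (dens_conv_nonneg h0 x hz)
  have htop : Tendsto J atTop (𝓝 0) := by
    refine (J_top h0 hv x).congr' ?_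
    filter_upwards [eventually_gt_atTop 0] with z hz
    rw [hJ, Function.update_of_ne hz.ne']
  have hi := integrableOn_Ioi_deriv_of_nonneg hcont hder hpos htop
  have hv := integral_Ioi_of_hasDerivAt_of_nonneg hcont hder hpos htop
  constructor
  · have := hi.const_mul (1 / 2)
    refine IntegrableOn.congr_fun this (fun z _ => ?_) measurableSet_Ioi
    ring
  · rw [integral_const_mul] at hv
    have hJ0 : J 0 = l := by simp [hJ]
    rw [hJ0, hl] at hv
    linarith



/-- Symmetric second difference. -/
def sdiff2 {n : ℕ} {F : Type} [NormedAddCommGroup F] [NormedSpace ℝ F] (w : En n → F) (x h : En n) : F :=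
  (2 : ℝ) • w x - w (x + h) - w (x - h)

/-- Riesz-type singular kernel. -/
def sker (n : ℕ) (s : ℝ) (h : En n) : ℝ := ‖h‖ ^ (-((n : ℝ) + 2 * s))

/-- Symmetrized singular integral. -/
def Tsg (n : ℕ) (s : ℝ) {F : Type} [NormedAddCommGroup F] [NormedSpace ℝ F] (w : En n → F) (x : En n) : F :=
  ∫ h, sker n s h • sdiff2 w x h

lemma sker_nonneg {n : ℕ} {s : ℝ} (h : En n) : 0 ≤ sker n s h := by
  unfold sker; positivity

lemma sker_meas {n : ℕ} {s : ℝ} : Measurable (sker n s) := by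
  unfold sker; fun_prop

lemma sker_neg {n : ℕ} {s : ℝ} (h : En n) : sker n s (-h) = sker n s h := by
  unfold sker; rw [norm_neg]

lemma swt_nonneg {n : ℕ} {s p : ℝ} (h : En n) : 0 ≤ swt n s p h := by
  unfold swt; positivity

/-- A quantity bounded by `min(1,|h|²)` times the kernel. -/
lemma sker_mul_le {n : ℕ} {s : ℝ} {a C : ℝ} (h : En n) (hC : 0 ≤ C) (h1 : a ≤ C)
    (h2 : a ≤ C * ‖h‖ ^ 2) : sker n s h * a ≤ C * swt n s 2 h := by
  rcases eq_or_ne h 0 with rfl | hh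
  · have : a ≤ 0 := by simpa using h2
    calc _ ≤ 0 := mul_nonpos_of_nonneg_of_nonpos (sker_nonneg _) this
      _ ≤ _ := mul_nonneg hC (swt_nonneg _)
  have hp : 0 < ‖h‖ := norm_pos_iff.2 hh
  rw [swt, mul_min_of_nonneg _ _ hC]
  have k0 := sker_nonneg (s := s) h
  apply le_min
  · calc sker n s h * a ≤ sker n s h * (C * ‖h‖ ^ 2) := by gcongr
      _ = C * (‖h‖ ^ (2 : ℝ) * ‖h‖ ^ (-((n : ℝ) + 2 * s))) := by
        rw [sker]; norm_num; ring
      _ = _ := by rw [← Real.rpow_add hp]; rfl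
  · calc sker n s h * a ≤ sker n s h * C := by gcongr
      _ = _ := by rw [sker, mul_comm]

section
variable {n : ℕ} {F : Type} [NormedAddCommGroup F] [NormedSpace ℝ F]

lemma sdiff2_bound {w : En n → F} (hw : ContDiff ℝ (⊤ : ℕ∞) w) (hc : HasCompactSupport w) :
    ∃ C, 0 ≤ C ∧ ∀ x h, ‖sdiff2 w x h‖ ≤ C ∧ ‖sdiff2 w x h‖ ≤ C * ‖h‖ ^ 2 := by
  obtain ⟨M, hM⟩ := hc.exists_bound_of_continuous hw.continuous
  have hM0 : 0 ≤ M := (norm_nonneg _).trans (hM 0)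
  have hw' : ContDiff ℝ (⊤ : ℕ∞) (fderiv ℝ w) := hw.fderiv_right (by simp)
  obtain ⟨K, hK⟩ := ContDiff.lipschitzWith_of_hasCompactSupport (hc.fderiv ℝ) hw' (by simp)
  have hd : Differentiable ℝ w := hw.differentiable (by simp)
  refine ⟨4 * M + 2 * K, by positivity, fun x h => ⟨?_, ?_⟩⟩
  · calc ‖sdiff2 w x h‖ ≤ ‖(2 : ℝ) • w x‖ + ‖w (x + h)‖ + ‖w (x - h)‖ := by
          unfold sdiff2
          exact (norm_sub_le _ _).trans (by gcongr; exact norm_sub_le _ _)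
      _ ≤ 2 * M + M + M := by
          rw [norm_smul, Real.norm_two]
          gcongr <;> exact hM _
      _ ≤ _ := by linarith [K.coe_nonneg]
  · have key := Convex.norm_image_sub_le_of_norm_hasFDerivWithin_le (𝕜 := ℝ)
      (f := fun t => w (x + t) + w (x - t)) (f' := fun t => fderiv ℝ w (x + t) - fderiv ℝ w (x - t))
      (C := K * (2 * ‖h‖)) (s := Metric.closedBall 0 ‖h‖) (x := 0) (y := h) ?_ ?_
      (convex_closedBall _ _) (by simp) (by simp)
    · have e : sdiff2 w x h = -((w (x + h) + w (x - h)) - (w (x + 0) + w (x - 0))) := by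
        unfold sdiff2; rw [two_smul]; simp only [add_zero, sub_zero]; abel
      rw [e, norm_neg]
      refine key.trans ?_
      rw [sub_zero]
      nlinarith [K.coe_nonneg, norm_nonneg h, sq_nonneg ‖h‖, mul_nonneg hM0 (sq_nonneg ‖h‖)]
    · intro t _
      have a1 : HasFDerivAt (fun t => w (x + t)) (fderiv ℝ w (x + t)) t := by
        have := (hd (x + t)).hasFDerivAt.comp t ((hasFDerivAt_id t).const_add x)
        exact this.congr_fderiv (by ext; simp)
      have a2 : HasFDerivAt (fun t => w (x - t)) (-fderiv ℝ w (x - t)) t := by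
        have := (hd (x - t)).hasFDerivAt.comp t ((hasFDerivAt_id t).const_sub x)
        exact this.congr_fderiv (by ext; simp)
      exact ((a1.add a2).congr_fderiv (sub_eq_add_neg _ _).symm).hasFDerivWithinAt
    · intro t ht
      have := hK.dist_le_mul (x + t) (x - t)
      rw [dist_eq_norm, dist_eq_norm] at this
      refine this.trans ?_
      have e : x + t - (x - t) = (2 : ℝ) • t := by rw [two_smul]; abel
      rw [e, norm_smul, Real.norm_two]
      have : ‖t‖ ≤ ‖h‖ := by simpa using ht
      gcongr

lemma sdiff2_cont {w : En n → F} (hw : Continuous w) (x : En n) : Continuous (sdiff2 w x) := by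
  unfold sdiff2; fun_prop

lemma Tsg_meas {s : ℝ} {w : En n → F} (hw : Continuous w) (x : En n) :
    AEStronglyMeasurable (fun h => sker n s h • sdiff2 w x h) volume :=
  sker_meas.aestronglyMeasurable.smul (sdiff2_cont hw x).aestronglyMeasurable

lemma Tsg_integrable (hn : 1 ≤ n) {s : ℝ} (h0 : 0 < s) (h1 : s < 1) {w : En n → F}
    (hw : ContDiff ℝ (⊤ : ℕ∞) w) (hc : HasCompactSupport w) (x : En n) :
    Integrable (fun h => sker n s h • sdiff2 w x h) := by
  obtain ⟨C, hC, hb⟩ := sdiff2_bound hw hc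
  refine ((swt_integrable hn h0 (by linarith : 2 * s < 2)).const_mul C).mono'
    (Tsg_meas hw.continuous x) (ae_of_all _ fun h => ?_)
  rw [norm_smul, Real.norm_eq_abs, abs_of_nonneg (sker_nonneg h)]
  exact sker_mul_le h hC (hb x h).1 (hb x h).2

lemma Tsg_hasFDerivAt (hn : 1 ≤ n) {s : ℝ} (h0 : 0 < s) (h1 : s < 1) {w : En n → F}
    (hw : ContDiff ℝ (⊤ : ℕ∞) w) (hc : HasCompactSupport w) (x : En n) :
    HasFDerivAt (Tsg n s w) (Tsg n s (fderiv ℝ w) x) x := by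
  have hw' : ContDiff ℝ (⊤ : ℕ∞) (fderiv ℝ w) := hw.fderiv_right (by simp)
  have hd : Differentiable ℝ w := hw.differentiable (by simp)
  obtain ⟨C, hC, hb⟩ := sdiff2_bound hw' (hc.fderiv ℝ)
  refine hasFDerivAt_integral_of_dominated_of_fderiv_le (𝕜 := ℝ) (s := univ)
    (F := fun x h => sker n s h • sdiff2 w x h)
    (F' := fun x h => sker n s h • sdiff2 (fderiv ℝ w) x h) (bound := fun h => C * swt n s 2 h)
    univ_mem (Eventually.of_forall fun x => Tsg_meas hw.continuous x)
    (Tsg_integrable hn h0 h1 hw hc x) (Tsg_meas hw'.continuous x) ?_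
    ((swt_integrable hn h0 (by linarith : 2 * s < 2)).const_mul C) ?_
  · refine ae_of_all _ fun h x _ => ?_
    rw [norm_smul, Real.norm_eq_abs, abs_of_nonneg (sker_nonneg h)]
    exact sker_mul_le h hC (hb x h).1 (hb x h).2
  · refine ae_of_all _ fun h x _ => ?_
    apply HasFDerivAt.const_smul
    have a1 : HasFDerivAt (fun t => w (t + h)) (fderiv ℝ w (x + h)) x := by
      have := (hd (x + h)).hasFDerivAt.comp x ((hasFDerivAt_id x).add_const h)
      exact this.congr_fderiv (by ext; simp)
    have a2 : HasFDerivAt (fun t => w (t - h)) (fderiv ℝ w (x - h)) x := by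
      have := (hd (x - h)).hasFDerivAt.comp x ((hasFDerivAt_id x).sub_const h)
      exact this.congr_fderiv (by ext; simp)
    exact (((hd x).hasFDerivAt.const_smul (2 : ℝ)).sub a1).sub a2

end

lemma Tsg_contDiff {n : ℕ} (hn : 1 ≤ n) {s : ℝ} (h0 : 0 < s) (h1 : s < 1) (k : ℕ) :
    ∀ (F : Type) [NormedAddCommGroup F] [NormedSpace ℝ F] (w : En n → F)
      (_ : ContDiff ℝ (⊤ : ℕ∞) w) (_ : HasCompactSupport w), ContDiff ℝ k (Tsg n s w) := by
  induction k with
  | zero =>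
    intro F _ _ w hw hc
    rw [Nat.cast_zero, contDiff_zero, continuous_iff_continuousAt]
    exact fun x => (Tsg_hasFDerivAt hn h0 h1 hw hc x).continuousAt
  | succ k ih =>
    intro F _ _ w hw hc
    rw [Nat.cast_succ, contDiff_succ_iff_fderiv]
    refine ⟨fun x => (Tsg_hasFDerivAt hn h0 h1 hw hc x).differentiableAt, by simp, ?_⟩
    have : fderiv ℝ (Tsg n s w) = Tsg n s (fderiv ℝ w) :=
      funext fun x => (Tsg_hasFDerivAt hn h0 h1 hw hc x).fderiv
    rw [this]
    exact ih _ _ (hw.fderiv_right (by simp)) (hc.fderiv ℝ)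

lemma Tsg_pd {n : ℕ} (hn : 1 ≤ n) {s : ℝ} (h0 : 0 < s) (h1 : s < 1) {w : En n → ℝ} (hw : Test w)
    (i : Fin n) : pd i (Tsg n s w) = Tsg n s (pd i w) := by
  ext x
  rw [pd, (Tsg_hasFDerivAt hn h0 h1 hw.smooth hw.compact x).fderiv, Tsg,
    ContinuousLinearMap.integral_apply (Tsg_integrable hn h0 h1 (hw.smooth.fderiv_right (by simp))
      (hw.compact.fderiv ℝ) x)]
  rfl

lemma Tsg_add {n : ℕ} (hn : 1 ≤ n) {s : ℝ} (h0 : 0 < s) (h1 : s < 1) {v w : En n → ℝ} (hv : Test v)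
    (hw : Test w) (x : En n) : Tsg n s (fun y => v y + w y) x = Tsg n s v x + Tsg n s w x := by
  rw [Tsg, Tsg, Tsg, ← integral_add (Tsg_integrable hn h0 h1 hv.smooth hv.compact x)
    (Tsg_integrable hn h0 h1 hw.smooth hw.compact x)]
  refine integral_congr_ae (ae_of_all _ fun h => ?_)
  simp only [sdiff2, smul_eq_mul]; ring

lemma Tsg_const_mul {n : ℕ} {s : ℝ} (c : ℝ) (v : En n → ℝ) (x : En n) :
    Tsg n s (fun y => c * v y) x = c * Tsg n s v x := by
  rw [Tsg, Tsg, ← integral_const_mul]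
  refine integral_congr_ae (ae_of_all _ fun h => ?_)
  simp only [sdiff2, smul_eq_mul]; ring

lemma Test.add {n : ℕ} {v w : En n → ℝ} (hv : Test v) (hw : Test w) : Test (fun y => v y + w y) :=
  ⟨hv.smooth.add hw.smooth, hv.compact.add hw.compact⟩

lemma Test.mul {n : ℕ} {v w : En n → ℝ} (hv : Test v) (hw : Test w) : Test (fun y => v y * w y) :=
  ⟨hv.smooth.mul hw.smooth, hv.compact.mul_right⟩

lemma Test.sum {n : ℕ} {ι : Type} (S : Finset ι) {f : ι → En n → ℝ} (h : ∀ i, Test (f i)) :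
    Test (fun x => ∑ i ∈ S, f i x) :=
  ⟨ContDiff.sum fun i _ => (h i).smooth, sum_compact S f fun i => (h i).compact⟩

lemma Tsg_sum {n : ℕ} (hn : 1 ≤ n) {s : ℝ} (h0 : 0 < s) (h1 : s < 1) {ι : Type} (S : Finset ι)
    {f : ι → En n → ℝ} (h : ∀ i, Test (f i)) (x : En n) :
    Tsg n s (fun y => ∑ i ∈ S, f i y) x = ∑ i ∈ S, Tsg n s (f i) x := by
  classical
  induction S using Finset.induction_on with
  | empty => simp [Tsg, sdiff2]
  | insert a S ha ih =>
    simp_rw [Finset.sum_insert ha]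
    rw [Tsg_add hn h0 h1 (h a) (Test.sum S h), ih]

lemma cover {n : ℕ} (hn : 1 ≤ n) : AECover (volume : Measure (En n)) (𝓝[>] (0 : ℝ)) (fun ε => {h : En n | ε < ‖h‖}) := by
  have : Nonempty (Fin n) := ⟨⟨0, hn⟩⟩
  have : Nontrivial (En n) := inferInstance
  refine ⟨?_, fun ε => measurableSet_lt measurable_const measurable_norm⟩
  have hne : ∀ᵐ y : En n, y ≠ 0 := by
    simp [ae_iff, measure_singleton]
  filter_upwards [hne] with y hy
  exact mem_nhdsWithin_of_mem_nhds (gt_mem_nhds (norm_pos_iff.2 hy))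

lemma sker_out {n : ℕ} (hn : 1 ≤ n) {s : ℝ} (h0 : 0 < s) (h1 : s < 1) {ε : ℝ} (hε : 0 < ε) :
    IntegrableOn (sker n s) {h : En n | ε < ‖h‖} := by
  have hi := ((swt_integrable hn h0 (by linarith : 2 * s < 2)).const_mul (1 / min (ε ^ 2) 1)).integrableOn
    (s := {h : En n | ε < ‖h‖})
  refine Integrable.mono' hi sker_meas.aestronglyMeasurable ?_
  filter_upwards [ae_restrict_mem (measurableSet_lt measurable_const measurable_norm)] with h hh
  replace hh : ε < ‖h‖ := hh
  have hm : 0 < min (ε ^ 2) 1 := by positivity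
  rw [Real.norm_eq_abs, abs_of_nonneg (sker_nonneg h)]
  have := sker_mul_le (s := s) (a := 1) (C := 1 / min (ε ^ 2) 1) h (by positivity)
    (by rw [le_div_iff₀ hm]; simp) (by
      rw [div_mul_eq_mul_div, one_mul, le_div_iff₀ hm, one_mul]
      exact (min_le_left _ _).trans (by gcongr))
  simpa using this

lemma set_trans {n : ℕ} (x : En n) (ε : ℝ) (G : En n → ℝ) :
    ∫ y in {y : En n | ε < ‖x - y‖}, G (x - y) = ∫ h in {h : En n | ε < ‖h‖}, G h := by
  have m1 : MeasurableSet {y : En n | ε < ‖x - y‖} :=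
    measurableSet_lt measurable_const (by fun_prop)
  have m2 : MeasurableSet {h : En n | ε < ‖h‖} := measurableSet_lt measurable_const measurable_norm
  rw [← integral_indicator m1, ← integral_indicator m2,
    ← integral_sub_left_eq_self (Set.indicator {h : En n | ε < ‖h‖} G) volume x]
  rfl

lemma set_neg {n : ℕ} (ε : ℝ) (G : En n → ℝ) :
    ∫ h in {h : En n | ε < ‖h‖}, G (-h) = ∫ h in {h : En n | ε < ‖h‖}, G h := by
  have m2 : MeasurableSet {h : En n | ε < ‖h‖} := measurableSet_lt measurable_const measurable_norm
  rw [← integral_indicator m2, ← integral_indicator m2,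
    ← integral_neg_eq_self (Set.indicator {h : En n | ε < ‖h‖} G) volume]
  congr 1; ext h
  simp [Set.indicator]

lemma fracLap_eq {n : ℕ} (hn : 1 ≤ n) {s : ℝ} (h0 : 0 < s) (h1 : s < 1) {w : En n → ℝ} (hw : Test w)
    (x : En n) : fracLap n s w x = Cns n s / 2 * Tsg n s w x := by
  have hT := (cover hn).integral_tendsto_of_countably_generated
    (Tsg_integrable hn h0 h1 hw.smooth hw.compact x)
  have hlim : Tendsto (fun ε : ℝ => ∫ y in {y : En n | ε < ‖x - y‖}, (w x - w y) / ‖x - y‖ ^ ((n : ℝ) + 2 * s))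
      (𝓝[>] 0) (𝓝 (1 / 2 * Tsg n s w x)) := by
    refine (hT.const_mul (1 / 2)).congr' ?_
    filter_upwards [self_mem_nhdsWithin] with ε hε
    replace hε : 0 < ε := hε
    obtain ⟨M, hM0, hM⟩ := hw.bound
    set S := {h : En n | ε < ‖h‖} with hS
    have i0 := sker_out hn h0 h1 hε
    have hib : ∀ g : En n → ℝ, Continuous g → (∀ y, |g y| ≤ 2 * M) →
        IntegrableOn (fun h => sker n s h * g h) S := by
      intro g hg hb
      exact i0.mul_bdd hg.aestronglyMeasurable (ae_of_all _ hb)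
    have hwc := hw.smooth.continuous
    have b : ∀ a c, |w a - w c| ≤ 2 * M := fun a c =>
      (abs_sub _ _).trans (by linarith [hM a, hM c])
    have i1 := hib (fun h => w x - w (x + h)) (by fun_prop) (fun h => b _ _)
    have i2 := hib (fun h => w x - w (x - h)) (by fun_prop) (fun h => b _ _)
    have e1 : ∫ y in {y : En n | ε < ‖x - y‖}, (w x - w y) / ‖x - y‖ ^ ((n : ℝ) + 2 * s)
        = ∫ h in S, sker n s h * (w x - w (x - h)) := by
      rw [hS, ← set_trans x ε (fun h => sker n s h * (w x - w (x - h)))]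
      congr 1; ext y
      rw [sker, Real.rpow_neg (norm_nonneg _), sub_sub_cancel]
      ring
    have e2 : ∫ h in S, sker n s h * (w x - w (x + h)) = ∫ h in S, sker n s h * (w x - w (x - h)) := by
      rw [hS, ← set_neg ε (fun h => sker n s h * (w x - w (x - h)))]
      simp_rw [sker_neg, sub_neg_eq_add]
    have e3 : ∫ h in S, sker n s h • sdiff2 w x h
        = (∫ h in S, sker n s h * (w x - w (x + h))) + ∫ h in S, sker n s h * (w x - w (x - h)) := by
      rw [← integral_add i1 i2]
      congr 1; ext h
      simp only [sdiff2, smul_eq_mul]; ring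
    rw [e1, e3, e2]; ring
  rw [fracLap, hlim.limUnder_eq]; ring

lemma Gamma1_eq {n : ℕ} (hn : 1 ≤ n) {s : ℝ} (h0 : 0 < s) (h1 : s < 1) {u v : En n → ℝ} (hu : Test u)
    (hv : Test v) (x : En n) : Gamma1 n s u v x
      = Cns n s / 4 * (-Tsg n s (fun y => u y * v y) x + u x * Tsg n s v x + v x * Tsg n s u x) := by
  rw [Gamma1, Lam, Lam, Lam, fracLap_eq hn h0 h1 (hu.mul hv), fracLap_eq hn h0 h1 hu,
    fracLap_eq hn h0 h1 hv]
  ring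

lemma Gamma1_self {n : ℕ} (hn : 1 ≤ n) {s : ℝ} (h0 : 0 < s) (h1 : s < 1) {v : En n → ℝ}
    (hv : Test v) (x : En n) : Gamma1 n s v v x = Cns n s / 2 * Qint n s v x := by
  rw [Gamma1_eq hn h0 h1 hv hv]
  obtain ⟨L, hL0, hL⟩ := hv.holder one_pos le_rfl
  obtain ⟨M, hM0, hM⟩ := hv.bound
  have hvc := hv.smooth.continuous
  have i2 : Integrable (fun h => sker n s h * (v x - v (x - h)) ^ 2) := by
    refine ((swt_integrable hn h0 (by linarith : 2 * s < 2)).const_mul (L ^ 2 + (2 * M) ^ 2)).mono'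
      (sker_meas.aestronglyMeasurable.mul (by
        have : Continuous (fun h => (v x - v (x - h)) ^ 2) := by fun_prop
        exact this.aestronglyMeasurable)) (ae_of_all _ fun h => ?_)
    rw [Real.norm_eq_abs, abs_of_nonneg (mul_nonneg (sker_nonneg h) (sq_nonneg _))]
    apply sker_mul_le h (by positivity)
    · have : |v x - v (x - h)| ≤ 2 * M := (abs_sub _ _).trans (by linarith [hM x, hM (x - h)])
      have := sq_le_sq' (by linarith [(abs_le.1 this).1]) (abs_le.1 this).2
      nlinarith [sq_nonneg L]
    · have := hL x (x - h)
      rw [sub_sub_cancel, Real.rpow_one] at this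
      have := sq_le_sq' (by linarith [(abs_le.1 this).1]) (abs_le.1 this).2
      nlinarith [mul_nonneg (sq_nonneg (2 * M)) (sq_nonneg ‖h‖)]
  have i1 : Integrable (fun h => sker n s h * (v x - v (x + h)) ^ 2) := by
    have := i2.comp_neg
    simpa [sker_neg] using this
  have e1 : Qint n s v x = ∫ h, sker n s h * (v x - v (x - h)) ^ 2 := by
    rw [← integral_sub_left_eq_self (fun h => sker n s h * (v x - v (x - h)) ^ 2) volume x, Qint]
    congr 1; ext y
    rw [sker, Real.rpow_neg (norm_nonneg _), sub_sub_cancel]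
    ring
  have e2 : ∫ h, sker n s h * (v x - v (x + h)) ^ 2 = ∫ h, sker n s h * (v x - v (x - h)) ^ 2 := by
    rw [← integral_neg_eq_self (fun h => sker n s h * (v x - v (x - h)) ^ 2) volume]
    simp_rw [sker_neg, sub_neg_eq_add]
  have e3 : Tsg n s (fun y => v y * v y) x - 2 * v x * Tsg n s v x
      = -((∫ h, sker n s h * (v x - v (x + h)) ^ 2) + ∫ h, sker n s h * (v x - v (x - h)) ^ 2) := by
    rw [← integral_add i1 i2, Tsg, Tsg, ← integral_const_mul, ← integral_sub
      (Tsg_integrable hn h0 h1 (hv.mul hv).smooth (hv.mul hv).compact x)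
      ((Tsg_integrable hn h0 h1 hv.smooth hv.compact x).const_mul _), ← integral_neg]
    congr 1; ext h
    simp only [sdiff2, smul_eq_mul]; ring
  rw [e2, ← e1] at e3
  linear_combination (-Cns n s / 4) * e3



lemma const_eq {n : ℕ} {s : ℝ} (h0 : 0 < s) (h1 : s < 1) : betaS s * (s * pns n s) = Cns n s / 2 := by
  have hG : Real.Gamma (1 - s) = -s * Real.Gamma (-s) := by
    have := Real.Gamma_add_one (s := -s) (by linarith)
    rw [← this]; congr 1; ring
  have hp : 0 < Real.Gamma (1 - s) := Real.Gamma_pos_of_pos (by linarith)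
  have hgs : 0 < Real.Gamma s := Real.Gamma_pos_of_pos h0
  have hneg : Real.Gamma (-s) < 0 := by
    by_contra hc
    push Not at hc
    nlinarith
  have habs : |Real.Gamma (-s)| = Real.Gamma (1 - s) / s := by
    rw [abs_of_neg hneg, hG]; field_simp
  have hpi : 0 < Real.pi ^ ((n : ℝ) / 2) := Real.rpow_pos_of_pos Real.pi_pos _
  have h4 : (2 : ℝ) ^ (2 * s - 1) = 4 ^ s / 2 := by
    rw [Real.rpow_sub two_pos, Real.rpow_one, Real.rpow_mul two_pos.le]
    norm_num
  rw [betaS, pns, Cns, habs, h4]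
  field_simp

lemma Test.diff {n : ℕ} {v : En n → ℝ} (h : Test v) : Differentiable ℝ v :=
  h.smooth.differentiable (by simp)

lemma Tsg_diff {n : ℕ} (hn : 1 ≤ n) {s : ℝ} (h0 : 0 < s) (h1 : s < 1) {w : En n → ℝ} (hw : Test w) :
    Differentiable ℝ (Tsg n s w) := fun x =>
  (Tsg_hasFDerivAt hn h0 h1 hw.smooth hw.compact x).differentiableAt

lemma Gamma1_fun {n : ℕ} (hn : 1 ≤ n) {s : ℝ} (h0 : 0 < s) (h1 : s < 1) {u : En n → ℝ} (hu : Test u) :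
    Gamma1 n s u u = fun x => Cns n s / 4 * ((-1) * Tsg n s (fun y => u y * u y) x
      + 2 * (u x * Tsg n s u x)) := by
  ext x
  rw [Gamma1_eq hn h0 h1 hu hu]; ring

lemma Gamma1_contDiff {n : ℕ} (hn : 1 ≤ n) {s : ℝ} (h0 : 0 < s) (h1 : s < 1) {u : En n → ℝ} (hu : Test u) :
    ContDiff ℝ 2 (Gamma1 n s u u) := by
  rw [Gamma1_fun hn h0 h1 hu]
  have a1 : ContDiff ℝ 2 (Tsg n s u) := Tsg_contDiff hn h0 h1 2 ℝ u hu.smooth hu.compact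
  have a2 : ContDiff ℝ 2 (Tsg n s (fun y => u y * u y)) :=
    Tsg_contDiff hn h0 h1 2 ℝ _ (hu.mul hu).smooth (hu.mul hu).compact
  have a3 : ContDiff ℝ 2 u := hu.smooth.of_le two_le_topp
  fun_prop

lemma pd2_sq {n : ℕ} {u : En n → ℝ} (hu : Test u) (i : Fin n) :
    pd i (pd i (fun y => u y * u y)) = fun y => 2 * (u y * pd i (pd i u) y) + 2 * (pd i u y * pd i u y) := by
  have hi := hu.pd i
  rw [pd_mul hu.diff hu.diff]
  have : (fun y => u y * pd i u y + u y * pd i u y) = fun y => 2 * (u y * pd i u y) := by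
    ext y; ring
  rw [this, pd_const_mul 2 (hu.mul hi).diff, pd_mul hu.diff hi.diff]
  ext y; ring

lemma pd2_Gamma {n : ℕ} (hn : 1 ≤ n) {s : ℝ} (h0 : 0 < s) (h1 : s < 1) {u : En n → ℝ} (hu : Test u)
    (i : Fin n) (x : En n) : pd i (pd i (Gamma1 n s u u)) x
      = Cns n s / 4 * (-(2 * Tsg n s (fun y => u y * pd i (pd i u) y) x
          + 2 * Tsg n s (fun y => pd i u y * pd i u y) x)
        + 2 * (u x * Tsg n s (pd i (pd i u)) x + 2 * (pd i u x * Tsg n s (pd i u) x)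
          + pd i (pd i u) x * Tsg n s u x)) := by
  have hi := hu.pd i
  have hii := hi.pd i
  have hq := hu.mul hu
  have t0 := Tsg_diff hn h0 h1 hu
  have t1 := Tsg_diff hn h0 h1 hi
  have tq := Tsg_diff hn h0 h1 hq
  have tqi := Tsg_diff hn h0 h1 (hq.pd i)
  have d0 := hu.diff
  have d1 := hi.diff
  have E1 : pd i (Gamma1 n s u u) = fun x => Cns n s / 4 * ((-1) * Tsg n s (pd i (fun y => u y * u y)) x
      + 2 * (u x * Tsg n s (pd i u) x + Tsg n s u x * pd i u x)) := by
    rw [Gamma1_fun hn h0 h1 hu, pd_const_mul _ (by fun_prop), pd_add (by fun_prop) (by fun_prop)]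
    rw [pd_const_mul _ tq, pd_const_mul _ (d0.fun_mul t0), pd_mul d0 t0, Tsg_pd hn h0 h1 hq,
      Tsg_pd hn h0 h1 hu]
  have E2 : pd i (pd i (Gamma1 n s u u)) x = Cns n s / 4 * ((-1) * Tsg n s (pd i (pd i (fun y => u y * u y))) x
      + 2 * ((u x * Tsg n s (pd i (pd i u)) x + Tsg n s (pd i u) x * pd i u x)
        + (Tsg n s u x * pd i (pd i u) x + pd i u x * Tsg n s (pd i u) x))) := by
    rw [E1, pd_const_mul _ (by fun_prop), pd_add (by fun_prop) (by fun_prop)]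
    rw [pd_const_mul _ tqi, pd_const_mul _ ((d0.fun_mul t1).fun_add (t0.fun_mul d1)),
      pd_add (d0.fun_mul t1) (t0.fun_mul d1), pd_mul d0 t1, pd_mul t0 d1, Tsg_pd hn h0 h1 (hq.pd i),
      Tsg_pd hn h0 h1 hi, Tsg_pd hn h0 h1 hu]
  rw [E2, pd2_sq hu]
  have e := Tsg_add hn h0 h1 (v := fun y => 2 * (u y * pd i (pd i u) y))
    (w := fun y => 2 * (pd i u y * pd i u y))
    ⟨contDiff_const.mul (hu.mul hii).smooth, (hu.mul hii).compact.mul_left⟩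
    ⟨contDiff_const.mul (hi.mul hi).smooth, (hi.mul hi).compact.mul_left⟩ x
  rw [Tsg_const_mul, Tsg_const_mul] at e
  simp only [e]
  ring

lemma bochner_lhs {n : ℕ} (hn : 1 ≤ n) {s : ℝ} (h0 : 0 < s) (h1 : s < 1) {u : En n → ℝ} (hu : Test u)
    (x : En n) : (1 / 2) * lapX (Gamma1 n s u u) x - Gamma1 n s u (lapX u) x
      = ∑ i, Gamma1 n s (pd i u) (pd i u) x := by
  rw [Gamma1_eq hn h0 h1 hu hu.lap]
  have e1 : Tsg n s (fun y => u y * lapX u y) x = ∑ i, Tsg n s (fun y => u y * pd i (pd i u) y) x := by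
    unfold lapX
    simp_rw [Finset.mul_sum]
    exact Tsg_sum hn h0 h1 _ (fun i => hu.mul ((hu.pd i).pd i)) x
  have e2 : Tsg n s (lapX u) x = ∑ i, Tsg n s (pd i (pd i u)) x :=
    Tsg_sum hn h0 h1 _ (fun i => ((hu.pd i).pd i)) x
  rw [e1, e2]
  unfold lapX
  rw [Finset.mul_sum, ← Finset.sum_neg_distrib, Finset.mul_sum, Finset.sum_mul, ← Finset.sum_add_distrib,
    ← Finset.sum_add_distrib, Finset.mul_sum, ← Finset.sum_sub_distrib]
  refine Finset.sum_congr rfl fun i _ => ?_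
  rw [pd2_Gamma hn h0 h1 hu, Gamma1_eq hn h0 h1 (hu.pd i) (hu.pd i)]
  ring

lemma density_eq {n : ℕ} {s : ℝ} (h0 : 0 < s) {u : En n → ℝ} (hu : Test u) {z : ℝ} (hz : 0 < z)
    (y : En n) : (∑ i, ∑ j, (pd i (pd j (fun y' => CSext n s u y' z)) y) ^ 2)
        + ∑ i, (pd i (fun y' => deriv (CSext n s u y') z) y) ^ 2 = ∑ i, dens n s (pd i u) z y := by
  obtain ⟨M, hM0, hM⟩ := hu.bound
  have e1 : ∀ i j, pd i (pd j (fun y' => CSext n s u y' z)) y = CSext n s (pd i (pd j u)) y z := by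
    intro i j
    rw [CSext_pd hu.smooth hu.compact hz, CSext_pd (hu.pd j).smooth (hu.pd j).compact hz]
  have e2 : (fun y' => deriv (CSext n s u y') z) = fun y' => z ^ (2 * s - 1) * Aext n s u y' z := by
    ext y'
    exact (CSext_hasDerivAt h0 hu.smooth.continuous hM y' hz).deriv
  have e3 : ∀ i, pd i (fun y' => deriv (CSext n s u y') z) y = z ^ (2 * s - 1) * Aext n s (pd i u) y z := by
    intro i
    rw [e2, pd_const_mul _ ((Aext_smooth hu.smooth hu.compact hz).differentiable (by simp)),
      Aext_pd hu.smooth hu.compact hz]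
  simp_rw [e1, e3, dens]
  rw [Finset.sum_add_distrib, Finset.sum_comm, add_comm]

lemma dens_int {n : ℕ} {s : ℝ} (h0 : 0 < s) {v : En n → ℝ} (hv : Test v) {z : ℝ} (hz : 0 < z)
    (x : En n) : Integrable (fun y => Pker n s z (x - y) * dens n s v z y) := by
  obtain ⟨M, hM0, hM⟩ := hv.bound
  obtain ⟨M1, hM10, hM1⟩ := Test.bound_fin (fun i => hv.pd i)
  have hA := (Aext_smooth (s := s) hv.smooth hv.compact hz).continuous
  have hS1 := fun i => (CSext_smooth (s := s) (hv.pd i).smooth (hv.pd i).compact hz).continuous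
  refine int_mul_bdd (Pker_integrable h0 hz) ?_ (M := (z ^ (2 * s - 1) *
    (CK n s * M * crad n ((n : ℝ) + 2 * s) * z ^ (-(2 * s)))) ^ 2 + ∑ i : Fin n, M1 ^ 2) ?_ x
  · unfold dens; fun_prop
  · intro y
    unfold dens
    refine (abs_add_le _ _).trans (add_le_add ?_ ((Finset.abs_sum_le_sum_abs _ _).trans
      (Finset.sum_le_sum fun i _ => ?_)))
    · rw [abs_pow, abs_mul, abs_of_pos (Real.rpow_pos_of_pos hz _)]
      gcongr
      exact Aext_abs_le h0 hz hM y
    · rw [abs_pow]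
      gcongr
      exact CSext_abs_le h0 hz (hM1 i) y

lemma bochner_rhs {n : ℕ} (hn : 1 ≤ n) {s : ℝ} (h0 : 0 < s) (h1 : s < 1) {u : En n → ℝ} (hu : Test u)
    (x : En n) : betaS s *
            ∫ z in Ioi (0 : ℝ),
              Pconv n s z
                (fun y =>
                  (∑ i, ∑ j, (pd i (pd j (fun y' => CSext n s u y' z)) y) ^ 2)
                    + ∑ i, (pd i (fun y' => deriv (CSext n s u y') z) y) ^ 2) x
                * z ^ (1 - 2 * s)
      = ∑ i, Gamma1 n s (pd i u) (pd i u) x := by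
  have e : ∫ z in Ioi (0 : ℝ),
              Pconv n s z
                (fun y =>
                  (∑ i, ∑ j, (pd i (pd j (fun y' => CSext n s u y' z)) y) ^ 2)
                    + ∑ i, (pd i (fun y' => deriv (CSext n s u y') z) y) ^ 2) x
                * z ^ (1 - 2 * s)
      = ∫ z in Ioi (0 : ℝ), ∑ i, Pconv n s z (dens n s (pd i u) z) x * z ^ (1 - 2 * s) := by
    refine setIntegral_congr_fun measurableSet_Ioi fun z hz => ?_
    replace hz : 0 < z := hz
    rw [← Finset.sum_mul]
    congr 1
    unfold Pconv
    rw [← integral_finsetSum _ (fun i _ => dens_int h0 (hu.pd i) hz x)]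
    refine integral_congr_ae (ae_of_all _ fun y => ?_)
    simp only
    rw [← Finset.mul_sum, ← density_eq h0 hu hz y]
  rw [e, integral_finsetSum _ (fun i _ => (energy hn h0 h1 (hu.pd i) x).1), Finset.mul_sum]
  refine Finset.sum_congr rfl fun i _ => ?_
  rw [(energy hn h0 h1 (hu.pd i) x).2, Gamma1_self hn h0 h1 (hu.pd i), ← const_eq h0 h1]
  ring

/-- **Fractional Bochner's formula, `𝒜`-form** (Euclidean case):
`½ Δ(Γ₁(u,u)) - Γ₁(u, Δu) = β_s ∫₀^∞ (P_z^{(s)} ∗ (|∇²_x U|² + |∇_x ∂_z U|²)) z^{1-2s} dz`,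
and `Γ₁(u,u)` is twice continuously differentiable. -/
theorem fractional_Bochner_A (n : ℕ) (hn : 1 ≤ n) (s : ℝ) (hs0 : 0 < s) (hs1 : s < 1)
    (u : En n → ℝ) (hu : ContDiff ℝ (⊤ : ℕ∞) u) (huc : HasCompactSupport u)
    (hint : ∫⁻ p in (univ : Set (En n)) ×ˢ Ioi (0 : ℝ),
      ENNReal.ofReal
        (p.2 ^ (1 - 2 * s) *
          ((∑ i, ∑ j, (pd i (pd j (fun y => CSext n s u y p.2)) p.1) ^ 2)
            + ∑ i, (pd i (fun y => deriv (CSext n s u y) p.2) p.1) ^ 2)) < ⊤) :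
    ContDiff ℝ 2 (Gamma1 n s u u)
    ∧ ∀ x : En n,
        (1 / 2) * lapX (Gamma1 n s u u) x - Gamma1 n s u (lapX u) x =
          betaS s *
            ∫ z in Ioi (0 : ℝ),
              Pconv n s z
                (fun y =>
                  (∑ i, ∑ j, (pd i (pd j (fun y' => CSext n s u y' z)) y) ^ 2)
                    + ∑ i, (pd i (fun y' => deriv (CSext n s u y') z) y) ^ 2) x
                * z ^ (1 - 2 * s) := by
  have hT : Test u := ⟨hu, huc⟩
  refine ⟨Gamma1_contDiff hn hs0 hs1 hT, fun x => ?_⟩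
  rw [bochner_lhs hn hs0 hs1 hT x, bochner_rhs hn hs0 hs1 hT x]
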